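/- arXiv:2201.11145 — 2 statements merged into one kernel-verified Lean document; each statement's English description precedes it below -/
import Mathlib

section
/- (Siegel's theorem) For every ε > 0 there exists a constant C(ε) > 0 such that for every integer q > 1 and every primitive quadratic Dirichlet character χ modulo q, the value of the Dirichlet L-function at 1 satisfies L(1,χ) > C(ε)·q^(−ε). (In particular L(1,χ) is a positive real number.) -/
section
open Complex Filter Topology

namespace Siegel

/-- partial sums of a character -/
noncomputable def S {q : ℕ} (χ : DirichletCharacter ℂ q) (n : ℕ) : ℂ :=
  ∑ k ∈ Finset.range n, χ ((k + 1 : ℕ) : ZMod q)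

lemma S_norm_le_self {q : ℕ} (χ : DirichletCharacter ℂ q) (n : ℕ) : ‖S χ n‖ ≤ n := by
  unfold S
  refine (norm_sum_le _ _).trans ?_
  refine (Finset.sum_le_sum (fun i _ => χ.norm_le_one _)).trans ?_
  simp

lemma S_period {q : ℕ} [NeZero q] (χ : DirichletCharacter ℂ q) (hχ : χ ≠ 1) (m : ℕ) :
    S χ (m + q) = S χ m := by
  induction m with
  | zero =>
    unfold S
    simp only [zero_add, Finset.range_zero, Finset.sum_empty]
    have h := χ.sum_eq_zero_of_ne_one hχ
    rw [← h]
    have h2 : ∑ a : ZMod q, χ a = ∑ a : ZMod q, χ (a + 1) :=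
      (Equiv.sum_comp (Equiv.addRight (1 : ZMod q)) (fun a => χ a)).symm
    rw [h2]
    refine Finset.sum_bij' (fun k _ => (k : ZMod q)) (fun a _ => a.val) ?_ ?_ ?_ ?_ ?_
    · intros; simp
    · intro a _; simpa using ZMod.val_lt a
    · intro a ha; exact ZMod.val_cast_of_lt (by simpa using ha)
    · intro a _; simp
    · intro a _; simp
  | succ m ih =>
    have e1 : S χ (m + 1 + q) = S χ (m + q) + χ ((m + q + 1 : ℕ) : ZMod q) := by
      unfold S; rw [show m + 1 + q = (m + q) + 1 by ring, Finset.sum_range_succ]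
    have e2 : S χ (m + 1) = S χ m + χ ((m + 1 : ℕ) : ZMod q) := by
      unfold S; rw [Finset.sum_range_succ]
    rw [e1, e2, ih]; simp

lemma S_norm_le {q : ℕ} [NeZero q] (χ : DirichletCharacter ℂ q) (hχ : χ ≠ 1) (n : ℕ) :
    ‖S χ n‖ ≤ q := by
  have h : ∀ k m, S χ (m + q * k) = S χ m := by
    intro k
    induction k with
    | zero => simp
    | succ k ih => intro m; rw [show m + q * (k + 1) = (m + q * k) + q by ring, S_period χ hχ, ih]
  have := h (n / q) (n % q)
  rw [Nat.mod_add_div] at this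
  rw [this]
  refine (S_norm_le_self χ _).trans ?_
  exact_mod_cast (Nat.mod_lt n (NeZero.pos q)).le

lemma diff_bound (n : ℕ) (s : ℂ) (hs : 0 < s.re) :
    ‖((n + 1 : ℕ) : ℂ) ^ (-s) - ((n + 2 : ℕ) : ℂ) ^ (-s)‖ ≤ ‖s‖ * ((n : ℝ) + 1) ^ (-s.re - 1) := by
  have key := (convex_Icc ((n : ℝ) + 1) (n + 2)).norm_image_sub_le_of_norm_hasDerivWithin_le
    (f := fun t : ℝ => (t : ℂ) ^ (-s)) (f' := fun t : ℝ => (-s) * (t : ℂ) ^ (-s - 1))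
    (C := ‖s‖ * ((n : ℝ) + 1) ^ (-s.re - 1)) (x := (n : ℝ) + 2) (y := (n : ℝ) + 1) ?_ ?_ ?_ ?_
  · push_cast at key ⊢
    refine key.trans (le_of_eq ?_)
    rw [show (n : ℝ) + 1 - (n + 2) = -1 by ring]; simp
  · intro x hx
    have hx0 : 0 < x := lt_of_lt_of_le (by positivity) hx.1
    have h1 : HasDerivAt (fun z : ℂ => z ^ (-s)) ((-s) * (x : ℂ) ^ (-s - 1) * 1) (x : ℂ) :=
      (hasDerivAt_id (x : ℂ)).cpow_const (by simp [hx0])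
    rw [mul_one] at h1
    exact h1.comp_ofReal.hasDerivWithinAt
  · intro x hx
    have hx0 : 0 < x := lt_of_lt_of_le (by positivity) hx.1
    rw [norm_mul, norm_neg, norm_cpow_eq_rpow_re_of_pos hx0]
    simp only [sub_re, neg_re, one_re]
    gcongr ‖s‖ * ?_
    exact Real.rpow_le_rpow_of_nonpos (by positivity) hx.1 (by linarith)
  · constructor <;> linarith
  · constructor <;> linarith

/-- Abel-summed terms -/
noncomputable def T {q : ℕ} (χ : DirichletCharacter ℂ q) (n : ℕ) (s : ℂ) : ℂ :=
  S χ (n + 1) * (((n + 1 : ℕ) : ℂ) ^ (-s) - ((n + 2 : ℕ) : ℂ) ^ (-s))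

lemma summable_shift {r : ℝ} (hr : 0 < r) : Summable (fun n : ℕ => ((n : ℝ) + 1) ^ (-r - 1)) := by
  have h := (Real.summable_nat_rpow (p := -r - 1)).2 (by linarith)
  have := (summable_nat_add_iff 1).2 h
  simpa using this

lemma T_bound {q : ℕ} [NeZero q] (χ : DirichletCharacter ℂ q) (hχ : χ ≠ 1) (n : ℕ) (s : ℂ)
    (hs : 0 < s.re) : ‖T χ n s‖ ≤ q * (‖s‖ * ((n : ℝ) + 1) ^ (-s.re - 1)) := by
  unfold T
  rw [norm_mul]
  exact mul_le_mul (S_norm_le χ hχ _) (diff_bound n s hs) (norm_nonneg _) (by positivity)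

lemma T_summable {q : ℕ} [NeZero q] (χ : DirichletCharacter ℂ q) (hχ : χ ≠ 1) (s : ℂ)
    (hs : 0 < s.re) : Summable (fun n => T χ n s) :=
  Summable.of_norm_bounded (((summable_shift hs).mul_left _).mul_left _) (fun n => T_bound χ hχ n s hs)

lemma T_diff {q : ℕ} [NeZero q] (χ : DirichletCharacter ℂ q) (hχ : χ ≠ 1) :
    DifferentiableOn ℂ (fun s => ∑' n, T χ n s) {s | 0 < s.re} := by
  intro s hs
  have hs' : 0 < s.re := hs
  have hU : IsOpen ({z : ℂ | s.re / 2 < z.re} ∩ Metric.ball 0 (‖s‖ + 1)) :=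
    (isOpen_lt continuous_const continuous_re).inter Metric.isOpen_ball
  have h := differentiableOn_tsum_of_summable_norm (F := fun n s => T χ n s)
    (u := fun n : ℕ => (q : ℝ) * ((‖s‖ + 1) * ((n : ℝ) + 1) ^ (-(s.re / 2) - 1)))
    (((summable_shift (half_pos hs')).mul_left _).mul_left _) ?_ hU ?_
  · refine (h.differentiableAt (hU.mem_nhds ⟨?_, ?_⟩)).differentiableWithinAt
    · simp; linarith
    · simp
  · intro n z hz
    unfold T
    have h1 : ((n + 1 : ℕ) : ℂ) ≠ 0 := by exact_mod_cast Nat.succ_ne_zero n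
    have h2 : ((n + 2 : ℕ) : ℂ) ≠ 0 := by exact_mod_cast Nat.succ_ne_zero (n+1)
    refine DifferentiableAt.differentiableWithinAt ?_
    refine DifferentiableAt.const_mul (DifferentiableAt.sub ?_ ?_) _
    · exact (differentiableAt_id.neg).const_cpow (Or.inl h1)
    · exact (differentiableAt_id.neg).const_cpow (Or.inl h2)
  · rintro n z ⟨hz1, hz2⟩
    have hz1' : s.re / 2 < z.re := hz1
    refine (T_bound χ hχ n z (by linarith)).trans ?_
    have : ‖z‖ ≤ ‖s‖ + 1 := by
      rw [mem_ball_zero_iff] at hz2; exact hz2.le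
    gcongr
    linarith

lemma abel {q : ℕ} (χ : DirichletCharacter ℂ q) (s : ℂ) (N : ℕ) :
    ∑ n ∈ Finset.range N, χ ((n + 1 : ℕ) : ZMod q) * ((n + 1 : ℕ) : ℂ) ^ (-s) =
      S χ N * ((N + 1 : ℕ) : ℂ) ^ (-s) + ∑ n ∈ Finset.range N, T χ n s := by
  induction N with
  | zero => simp [S]
  | succ N ih =>
    rw [Finset.sum_range_succ, ih, Finset.sum_range_succ]
    have e2 : S χ (N + 1) = S χ N + χ ((N + 1 : ℕ) : ZMod q) := by
      unfold S; rw [Finset.sum_range_succ]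
    unfold T
    rw [e2]; ring

lemma LFunction_eq_T_of_one_lt {q : ℕ} [NeZero q] (χ : DirichletCharacter ℂ q) (hχ : χ ≠ 1) (s : ℂ)
    (hs : 1 < s.re) : χ.LFunction s = ∑' n, T χ n s := by
  rw [χ.LFunction_eq_LSeries hs]
  have hsum := DirichletCharacter.LSeriesSummable_of_one_lt_re χ hs
  have hL := hsum.LSeriesHasSum
  unfold LSeriesHasSum at hL
  have h1 := (hasSum_nat_add_iff' 1).2 hL
  have h2 : Tendsto (fun N => ∑ n ∈ Finset.range N,
      χ ((n + 1 : ℕ) : ZMod q) * ((n + 1 : ℕ) : ℂ) ^ (-s)) atTop (𝓝 (LSeries (χ ·) s)) := by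
    have h3 := h1.tendsto_sum_nat
    simp only [Finset.range_one, Finset.sum_singleton, LSeries.term_zero, sub_zero] at h3
    refine h3.congr (fun N => Finset.sum_congr rfl (fun n _ => ?_))
    rw [LSeries.term_of_ne_zero (Nat.succ_ne_zero n), cpow_neg, div_eq_mul_inv]
  have h4 : Tendsto (fun N => ∑ n ∈ Finset.range N, T χ n s) atTop (𝓝 (∑' n, T χ n s)) :=
    (T_summable χ hχ s (by linarith)).hasSum.tendsto_sum_nat
  have h5 : Tendsto (fun N : ℕ => S χ N * ((N + 1 : ℕ) : ℂ) ^ (-s)) atTop (𝓝 0) := by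
    refine squeeze_zero_norm (a := fun N : ℕ => (q : ℝ) * (((N + 1 : ℕ) : ℝ)) ^ (-s.re)) ?_ ?_
    · intro N
      rw [norm_mul, norm_natCast_cpow_of_pos (Nat.succ_pos N)]
      rw [neg_re]
      gcongr
      exact S_norm_le χ hχ N
    · have := (tendsto_rpow_neg_atTop (show 0 < s.re by linarith)).comp
        (tendsto_natCast_atTop_atTop.comp (tendsto_add_atTop_nat 1))
      simpa using this.const_mul (q : ℝ)
  have h6 := h5.add h4
  rw [zero_add] at h6
  refine tendsto_nhds_unique h2 (h6.congr (fun N => (abel χ s N).symm))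

lemma LFunction_eq_T {q : ℕ} [NeZero q] (χ : DirichletCharacter ℂ q) (hχ : χ ≠ 1) (s : ℂ)
    (hs : 0 < s.re) : χ.LFunction s = ∑' n, T χ n s := by
  have hopen : IsOpen {s : ℂ | 0 < s.re} := isOpen_lt continuous_const continuous_re
  have hconn : IsPreconnected {s : ℂ | 0 < s.re} := (convex_halfSpace_re_gt 0).isPreconnected
  have hA : AnalyticOnNhd ℂ χ.LFunction {s : ℂ | 0 < s.re} :=
    (DirichletCharacter.differentiable_LFunction hχ).differentiableOn.analyticOnNhd hopen
  have hB : AnalyticOnNhd ℂ (fun s => ∑' n, T χ n s) {s : ℂ | 0 < s.re} :=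
    (T_diff χ hχ).analyticOnNhd hopen
  refine hA.eqOn_of_preconnected_of_eventuallyEq hB hconn (z₀ := 2) (by simp) ?_ hs
  have : {s : ℂ | 1 < s.re} ∈ 𝓝 (2 : ℂ) :=
    (isOpen_lt continuous_const continuous_re).mem_nhds (by simp)
  filter_upwards [this] with z hz using LFunction_eq_T_of_one_lt χ hχ z hz

lemma LFunction_bound : ∃ K : ℝ, 1 ≤ K ∧ ∀ (q : ℕ) [NeZero q] (χ : DirichletCharacter ℂ q), χ ≠ 1 →
    ∀ s : ℂ, 1 / 2 ≤ s.re → ‖s‖ ≤ 7 / 2 → ‖χ.LFunction s‖ ≤ K * q := by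
  refine ⟨1 + 7 / 2 * ∑' n : ℕ, ((n : ℝ) + 1) ^ (-(1 / 2 : ℝ) - 1), ?_, ?_⟩
  · have : 0 ≤ ∑' n : ℕ, ((n : ℝ) + 1) ^ (-(1 / 2 : ℝ) - 1) := tsum_nonneg (fun n => by positivity)
    linarith
  · intro q _ χ hχ s hs hs2
    have hsum := summable_shift (show (0 : ℝ) < 1 / 2 by norm_num)
    rw [LFunction_eq_T χ hχ s (by linarith)]
    have := tsum_of_norm_bounded ((hsum.mul_left (7 / 2)).mul_left (q : ℝ)).hasSum (f := fun n => T χ n s) ?_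
    · refine this.trans ?_
      rw [tsum_mul_left, tsum_mul_left]
      have : (0 : ℝ) ≤ q := by positivity
      nlinarith
    · intro n
      refine (T_bound χ hχ n s (by linarith)).trans ?_
      gcongr
      linarith

lemma LFunction_one_bound (η : ℝ) (hη : 0 < η) (hη1 : η < 1) : ∃ K : ℝ, 0 < K ∧
    ∀ (q : ℕ) [NeZero q] (χ : DirichletCharacter ℂ q), χ ≠ 1 → ‖χ.LFunction 1‖ ≤ K * (q : ℝ) ^ η := by
  refine ⟨1 + ∑' n : ℕ, ((n : ℝ) + 1) ^ (-η - 1), ?_, ?_⟩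
  · have : 0 ≤ ∑' n : ℕ, ((n : ℝ) + 1) ^ (-η - 1) := tsum_nonneg (fun n => by positivity)
    linarith
  · intro q _ χ hχ
    have hsum := summable_shift hη
    rw [LFunction_eq_T χ hχ 1 (by simp)]
    have hq : (0 : ℝ) ≤ (q : ℝ) ^ η := by positivity
    have := tsum_of_norm_bounded (hsum.mul_left ((q : ℝ) ^ η)).hasSum (f := fun n => T χ n 1) ?_
    · refine this.trans ?_
      rw [tsum_mul_left]
      nlinarith
    · intro n
      unfold T
      rw [norm_mul]
      have h1 : ‖S χ (n + 1)‖ ≤ (q : ℝ) ^ η * ((n : ℝ) + 1) ^ (1 - η) := by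
        have a1 := S_norm_le χ hχ (n + 1)
        have a2 := S_norm_le_self χ (n + 1)
        push_cast at a2
        rcases (norm_nonneg (S χ (n + 1))).eq_or_lt with h0 | h0
        · rw [← h0]; positivity
        calc ‖S χ (n + 1)‖ = ‖S χ (n + 1)‖ ^ η * ‖S χ (n + 1)‖ ^ (1 - η) := by
              rw [← Real.rpow_add h0]; simp
          _ ≤ _ := by gcongr
      have h2 := diff_bound n 1 (by simp)
      simp only [one_re, norm_one, one_mul] at h2
      refine (mul_le_mul h1 h2 (norm_nonneg _) (by positivity)).trans (le_of_eq ?_)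
      rw [mul_assoc, ← Real.rpow_add (by positivity)]
      congr 2; ring

lemma char_real {q : ℕ} (χ : DirichletCharacter ℂ q) (h2 : χ ^ 2 = 1) (a : ZMod q) :
    χ a = 0 ∨ χ a = 1 ∨ χ a = -1 := by
  by_cases ha : IsUnit a
  · right
    have : (χ ^ 2) a = 1 := by rw [h2, MulChar.one_apply ha]
    rw [MulChar.pow_apply' _ two_ne_zero] at this
    exact by simpa using this
  · left; exact χ.map_nonunit ha

lemma LFunction_real {q : ℕ} [NeZero q] (χ : DirichletCharacter ℂ q) (hχ : χ ≠ 1) (h2 : χ ^ 2 = 1)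
    (x : ℝ) (hx : 0 < x) : χ.LFunction x = ((χ.LFunction x).re : ℂ) := by
  have hS : ∀ n, (starRingEnd ℂ) (S χ n) = S χ n := by
    intro n
    unfold S
    rw [map_sum]
    refine Finset.sum_congr rfl (fun k _ => ?_)
    rcases char_real χ h2 ((k + 1 : ℕ) : ZMod q) with h | h | h <;> rw [h] <;> simp
  have hp : ∀ n : ℕ, (starRingEnd ℂ) ((n : ℂ) ^ (-(x : ℂ))) = (n : ℂ) ^ (-(x : ℂ)) := by
    intro n
    have : ((n : ℂ) ^ (-(x : ℂ))) = (((n : ℝ) ^ (-x) : ℝ) : ℂ) := by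
      rw [ofReal_cpow (by positivity)]; simp
    rw [this, conj_ofReal]
  symm
  rw [← conj_eq_iff_re, LFunction_eq_T χ hχ x (by simpa using hx), conj_tsum]
  refine tsum_congr (fun n => ?_)
  unfold T
  rw [map_mul, map_sub, hS, hp, hp]

end Siegel

end

section
open Complex Filter Topology
open scoped ComplexOrder

namespace Siegel

lemma estermann (a : ℕ → ℂ) (ha : 0 ≤ a) (ha1 : a 1 = 1)
    (hs : ∀ s : ℂ, 1 < s.re → LSeriesSummable a s) (f : ℂ → ℂ) (hf : Differentiable ℂ f) (l : ℝ)
    (hF : ∀ s : ℂ, 1 < s.re → LSeries a s = f s + l * (s - 1)⁻¹) (K : ℝ)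
    (hK : ∀ s ∈ Metric.sphere (2 : ℂ) (3 / 2), ‖f s‖ ≤ K) (σ : ℝ) (h1 : 7 / 8 ≤ σ) (h2 : σ < 1)
    (hσ : (f σ).re ≤ l / (1 - σ)) (M : ℕ) (hM : 1 ≤ M) (hMK : 4 * K * (3 / 4) ^ M ≤ 1 / 2) :
    (1 - σ) / 2 ≤ l * (2 - σ) ^ M := by
  set t : ℝ := 2 - σ with ht
  set c : ℕ → ℝ := fun m => ((-1) ^ m * iteratedDeriv m f 2 / (m.factorial : ℂ)).re with hc
  have habs : LSeries.abscissaOfAbsConv a < ((2 : ℝ) : EReal) := by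
    have := (hs (3 / 2 : ℝ) (by simp; norm_num)).abscissaOfAbsConv_le
    refine this.trans_lt ?_
    simp only [ofReal_re]
    exact_mod_cast (by norm_num : (3 / 2 : ℝ) < 2)
  -- Taylor series
  have hT : HasSum (fun m => t ^ m * c m) (f σ).re := by
    have hz : (σ : ℂ) ∈ Metric.ball (2 : ℂ) 2 := by
      rw [mem_ball_iff_norm, show (σ : ℂ) - 2 = ((σ - 2 : ℝ) : ℂ) by push_cast; ring, norm_real,
        Real.norm_eq_abs, abs_lt]
      constructor <;> linarith
    have h := hasSum_re (Complex.hasSum_taylorSeries_on_ball (hf.differentiableOn) hz)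
    convert h using 2 with m
    rw [hc]
    simp only [smul_eq_mul]
    rw [show (σ : ℂ) - 2 = ((-1 * t : ℝ) : ℂ) by rw [ht]; push_cast; ring, ← re_ofReal_mul]
    congr 1
    push_cast
    rw [mul_pow]; ring
  have hcb : ∀ m, |c m| ≤ K * (2 / 3) ^ m := by
    intro m
    have h := norm_iteratedDeriv_le_of_forall_mem_sphere_norm_le (c := 2) (R := 3 / 2) m
      (by norm_num) hf.diffContOnCl hK
    refine (abs_re_le_norm _).trans ?_
    rw [norm_div, norm_mul, norm_pow, norm_neg, norm_one, one_pow, one_mul, norm_natCast]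
    have hm : (0 : ℝ) < m.factorial := by positivity
    rw [div_le_iff₀ hm]
    refine h.trans (le_of_eq ?_)
    rw [div_pow, div_pow]; field_simp
  have hcl : ∀ m, c m + l = ((-1) ^ m * iteratedDeriv m (LSeries a) 2 / (m.factorial : ℂ)).re := by
    intro m
    have hev : LSeries a =ᶠ[𝓝 2] f + (fun s : ℂ => (l : ℂ) * (1 * s - 1)⁻¹) := by
      have : {s : ℂ | 1 < s.re} ∈ 𝓝 (2 : ℂ) :=
        (isOpen_lt continuous_const continuous_re).mem_nhds (by simp)
      filter_upwards [this] with z hz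
      simpa using hF z hz
    have hinv : ContDiffAt ℂ m (fun s : ℂ => (1 * s - 1)⁻¹) 2 := by
      refine ContDiffAt.inv (by fun_prop) (by norm_num)
    rw [hev.iteratedDeriv_eq, iteratedDeriv_add (hf.contDiff.contDiffAt) (contDiffAt_const.mul hinv),
      iteratedDeriv_const_mul _ hinv, iteratedDeriv_eq_iterate (f := fun s : ℂ => (1 * s - 1)⁻¹),
      iter_deriv_inv_linear_sub]
    have hm : (m.factorial : ℂ) ≠ 0 := by exact_mod_cast m.factorial_ne_zero
    have : (-1 : ℂ) ^ m * (iteratedDeriv m f 2 + l * ((-1) ^ m * m.factorial * 1 ^ m *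
        (1 * 2 - 1) ^ (-1 - m : ℤ))) / m.factorial =
        (-1) ^ m * iteratedDeriv m f 2 / m.factorial + l := by
      have e : (1 * 2 - 1 : ℂ) = 1 := by norm_num
      rw [e, one_zpow, one_pow]
      have e2 : (-1 : ℂ) ^ m * (-1) ^ m = 1 := by rw [← mul_pow]; simp
      field_simp
      linear_combination (l * m.factorial : ℂ) * e2
    rw [this, add_re, ofReal_re]
  have hcl0 : ∀ m, 0 ≤ c m + l := by
    intro m
    rw [hcl]
    have h := LSeries.iteratedDeriv_alternating ha habs m
    have hm : (0 : ℂ) ≤ ((m.factorial : ℝ) : ℂ)⁻¹ := by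
      rw [← ofReal_inv]; exact zero_le_real.2 (by positivity)
    have h' := mul_nonneg h hm
    have := (Complex.le_def.1 h').1
    simpa [div_eq_mul_inv] using this
  have hc1 : 1 ≤ c 0 + l := by
    rw [hcl]
    simp only [pow_zero, iteratedDeriv_zero, one_mul, Nat.factorial_zero, Nat.cast_one, div_one]
    have hsum : Summable (LSeries.term a 2) := hs 2 (by simp)
    have hnn : ∀ n, 0 ≤ LSeries.term a 2 n := by
      intro n
      have := LSeries.term_nonneg (ha n) (2 : ℝ)
      simpa using this
    have := hsum.le_tsum 1 (fun n _ => hnn n)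
    have := (Complex.le_def.1 this).1
    rw [LSeries.term_of_ne_zero one_ne_zero, ha1] at this
    simpa [LSeries] using this
  have hK0 : 0 ≤ K := by simpa using (abs_nonneg _).trans (hcb 0)
  have ht1 : 1 < t := by linarith
  have ht2 : t ≤ 9 / 8 := by linarith
  -- tail
  have htail : ∀ m, |t ^ m * c m| ≤ K * (3 / 4) ^ m := by
    intro m
    rw [abs_mul, abs_of_nonneg (by positivity)]
    calc t ^ m * |c m| ≤ (9 / 8) ^ m * (K * (2 / 3) ^ m) := by gcongr; exact hcb m
      _ = K * (3 / 4) ^ m := by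
        rw [show (3 / 4 : ℝ) = 9 / 8 * (2 / 3) by norm_num, mul_pow]; ring
  have hgeo : HasSum (fun m : ℕ => K * (3 / 4 : ℝ) ^ (m + M)) (4 * K * (3 / 4) ^ M) := by
    have := (hasSum_geometric_of_lt_one (r := 3 / 4) (by norm_num) (by norm_num)).mul_left
      (K * (3 / 4) ^ M)
    have e1 : (fun m : ℕ => K * (3 / 4 : ℝ) ^ (m + M)) =
        fun m : ℕ => K * (3 / 4) ^ M * (3 / 4) ^ m := by
      funext m; rw [pow_add]; ring
    have e2 : 4 * K * (3 / 4 : ℝ) ^ M = K * (3 / 4) ^ M * (1 - 3 / 4)⁻¹ := by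
      rw [show ((1 : ℝ) - 3 / 4)⁻¹ = 4 by norm_num]; ring
    rw [e1, e2]; exact this
  have htl := (hasSum_nat_add_iff' M).2 hT
  have h3 : -(4 * K * (3 / 4) ^ M) ≤ (f σ).re - ∑ m ∈ Finset.range M, t ^ m * c m := by
    refine hasSum_le (fun m => ?_) hgeo.neg htl
    exact (abs_le.1 (htail (m + M))).1
  have h4 : 1 - l * ∑ m ∈ Finset.range M, t ^ m ≤ ∑ m ∈ Finset.range M, t ^ m * c m := by
    have : 1 ≤ ∑ m ∈ Finset.range M, t ^ m * (c m + l) := by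
      have h5 := Finset.single_le_sum (f := fun m => t ^ m * (c m + l))
        (fun m _ => mul_nonneg (by positivity) (hcl0 m)) (Finset.mem_range.2 hM : 0 ∈ Finset.range M)
      simp only [pow_zero, one_mul] at h5
      exact hc1.trans h5
    simp only [mul_add, Finset.sum_add_distrib] at this
    rw [← Finset.sum_mul] at this
    linarith
  have hgs : ∑ m ∈ Finset.range M, t ^ m = (t ^ M - 1) / (1 - σ) := by
    rw [geom_sum_eq ht1.ne', ht]; congr 1; ring
  have hpos : 0 < 1 - σ := by linarith
  rw [hgs] at h4
  have h6 : 1 / 2 ≤ l / (1 - σ) + l * ((t ^ M - 1) / (1 - σ)) := by linarith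
  have h7 : l / (1 - σ) + l * ((t ^ M - 1) / (1 - σ)) = l * t ^ M / (1 - σ) := by ring
  rw [h7, le_div_iff₀ hpos] at h6
  linarith

end Siegel

end

section
open Complex Filter Topology
open scoped ComplexOrder

namespace Siegel

/-- a character as an arithmetic function -/
noncomputable def X {q : ℕ} (χ : DirichletCharacter ℂ q) : ArithmeticFunction ℂ :=
  toArithmeticFunction (fun n : ℕ => χ (n : ZMod q))

/-- twisted von Mangoldt function -/
noncomputable def V {q : ℕ} (χ : DirichletCharacter ℂ q) : ArithmeticFunction ℂ :=
  toArithmeticFunction ((fun n : ℕ => χ (n : ZMod q)) *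
    (fun n : ℕ => ((ArithmeticFunction.vonMangoldt n : ℝ) : ℂ)))

/-- multiplication by the logarithm -/
noncomputable def D (f : ArithmeticFunction ℂ) : ArithmeticFunction ℂ :=
  ⟨fun n => Complex.log n * f n, by simp⟩

lemma D_apply (f : ArithmeticFunction ℂ) (n : ℕ) : D f n = Complex.log n * f n := rfl

lemma X_apply {q : ℕ} (χ : DirichletCharacter ℂ q) {n : ℕ} (hn : n ≠ 0) : X χ n = χ n := by
  simp [X, toArithmeticFunction, hn]

lemma V_apply {q : ℕ} (χ : DirichletCharacter ℂ q) {n : ℕ} (hn : n ≠ 0) :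
    V χ n = χ n * (ArithmeticFunction.vonMangoldt n : ℝ) := by
  simp [V, toArithmeticFunction, hn]

lemma D_mul (f g : ArithmeticFunction ℂ) : D (f * g) = D f * g + f * D g := by
  ext n
  rw [D_apply, ArithmeticFunction.add_apply, ArithmeticFunction.mul_apply,
    ArithmeticFunction.mul_apply, ArithmeticFunction.mul_apply, Finset.mul_sum,
    ← Finset.sum_add_distrib]
  refine Finset.sum_congr rfl (fun p hp => ?_)
  obtain ⟨h1, h2⟩ := Nat.mem_divisorsAntidiagonal.1 hp
  have hp1 : p.1 ≠ 0 := by rintro h; simp [h] at h1; exact h2 h1.symm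
  have hp2 : p.2 ≠ 0 := by rintro h; simp [h] at h1; exact h2 h1.symm
  rw [D_apply, D_apply, ← h1, ← natCast_log, ← natCast_log, ← natCast_log]
  push_cast
  rw [Real.log_mul (by exact_mod_cast hp1) (by exact_mod_cast hp2)]
  push_cast; ring

lemma D_X {q : ℕ} (χ : DirichletCharacter ℂ q) : D (X χ) = V χ * X χ := by
  ext n
  have h := congrFun (DirichletCharacter.convolution_twist_vonMangoldt χ) n
  unfold LSeries.convolution at h
  rcases eq_or_ne n 0 with rfl | hn
  · simp
  rw [D_apply, X_apply χ hn]
  refine Eq.trans ?_ h.symm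
  simp [mul_comm]

/-- coefficients of the Estermann product -/
noncomputable def P {q₁ q₂ q₃ : ℕ} (χ₁ : DirichletCharacter ℂ q₁) (χ₂ : DirichletCharacter ℂ q₂)
    (χ₃ : DirichletCharacter ℂ q₃) : ArithmeticFunction ℂ :=
  X (1 : DirichletCharacter ℂ 1) * (X χ₁ * (X χ₂ * X χ₃))

lemma P_one {q₁ q₂ q₃ : ℕ} (χ₁ : DirichletCharacter ℂ q₁) (χ₂ : DirichletCharacter ℂ q₂)
    (χ₃ : DirichletCharacter ℂ q₃) : P χ₁ χ₂ χ₃ 1 = 1 := by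
  simp [P, ArithmeticFunction.mul_apply, X_apply]
  exact MulChar.one_apply (isUnit_of_subsingleton _)

lemma D_P {q₁ q₂ q₃ : ℕ} (χ₁ : DirichletCharacter ℂ q₁) (χ₂ : DirichletCharacter ℂ q₂)
    (χ₃ : DirichletCharacter ℂ q₃) : D (P χ₁ χ₂ χ₃) =
      (V (1 : DirichletCharacter ℂ 1) + V χ₁ + V χ₂ + V χ₃) * P χ₁ χ₂ χ₃ := by
  unfold P
  rw [D_mul, D_mul, D_mul, D_X, D_X, D_X, D_X]
  ring

lemma P_nonneg {q₁ q₂ q₃ : ℕ} (χ₁ : DirichletCharacter ℂ q₁) (χ₂ : DirichletCharacter ℂ q₂)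
    (χ₃ : DirichletCharacter ℂ q₃) (h1 : χ₁ ^ 2 = 1) (h2 : χ₂ ^ 2 = 1)
    (h3 : ∀ n : ℕ, χ₃ n = χ₁ n * χ₂ n) (n : ℕ) : 0 ≤ P χ₁ χ₂ χ₃ n := by
  induction n using Nat.strong_induction_on with
  | _ n ih =>
    rcases Nat.lt_or_ge 1 n with hn | hn
    · have hD := congrArg (fun f : ArithmeticFunction ℂ => f n) (D_P χ₁ χ₂ χ₃)
      simp only [D_apply, ArithmeticFunction.mul_apply] at hD
      have hlog : (0 : ℝ) < Real.log n := Real.log_pos (by exact_mod_cast hn)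
      have hsum : 0 ≤ Complex.log n * P χ₁ χ₂ χ₃ n := by
        rw [hD]
        refine Finset.sum_nonneg (fun p hp => ?_)
        obtain ⟨e1, e2⟩ := Nat.mem_divisorsAntidiagonal.1 hp
        have hp1 : p.1 ≠ 0 := by rintro h; simp [h] at e1; exact e2 e1.symm
        have hp2 : p.2 ≠ 0 := by rintro h; simp [h] at e1; exact e2 e1.symm
        simp only [ArithmeticFunction.add_apply, V_apply _ hp1]
        rcases eq_or_ne p.1 1 with h | h
        · rw [h]; simp
        · refine mul_nonneg ?_ (ih _ ?_)
          · rw [h3]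
            have hL : (0 : ℂ) ≤ ((ArithmeticFunction.vonMangoldt p.1 : ℝ) : ℂ) :=
              zero_le_real.2 ArithmeticFunction.vonMangoldt_nonneg
            have e : (1 : DirichletCharacter ℂ 1) (p.1 : ZMod 1) = 1 :=
              MulChar.one_apply (isUnit_of_subsingleton _)
            rw [e, ← add_mul, ← add_mul, ← add_mul]
            refine mul_nonneg ?_ hL
            rcases char_real χ₁ h1 (p.1 : ZMod q₁) with h | h | h <;>
            rcases char_real χ₂ h2 (p.1 : ZMod q₂) with h' | h' | h' <;> rw [h, h'] <;> norm_num
          · rw [← e1]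
            have : 1 < p.1 := by omega
            nlinarith [Nat.pos_of_ne_zero hp2]
      rw [← natCast_log] at hsum
      have hi : (0 : ℂ) ≤ (((Real.log n)⁻¹ : ℝ) : ℂ) := zero_le_real.2 (by positivity)
      have := mul_nonneg hi hsum
      rwa [← mul_assoc, ← ofReal_mul, inv_mul_cancel₀ hlog.ne', ofReal_one, one_mul] at this
    · interval_cases n
      · simp
      · rw [P_one]; simp

lemma X_summable {q : ℕ} (χ : DirichletCharacter ℂ q) (s : ℂ) (hs : 1 < s.re) :
    LSeriesSummable (fun n => X χ n) s :=
  (LSeriesSummable_congr s (fun {n} hn => X_apply χ hn)).2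
    (DirichletCharacter.LSeriesSummable_of_one_lt_re χ hs)

lemma X_LSeries {q : ℕ} [NeZero q] (χ : DirichletCharacter ℂ q) (s : ℂ) (hs : 1 < s.re) :
    LSeries (fun n => X χ n) s = χ.LFunction s := by
  rw [χ.LFunction_eq_LSeries hs]
  exact LSeries_congr (fun {n} hn => X_apply χ hn) s

lemma P_summable {q₁ q₂ q₃ : ℕ} (χ₁ : DirichletCharacter ℂ q₁) (χ₂ : DirichletCharacter ℂ q₂)
    (χ₃ : DirichletCharacter ℂ q₃) (s : ℂ) (hs : 1 < s.re) :
    LSeriesSummable (fun n => P χ₁ χ₂ χ₃ n) s :=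
  ArithmeticFunction.LSeriesSummable_mul (X_summable _ s hs)
    (ArithmeticFunction.LSeriesSummable_mul (X_summable _ s hs)
      (ArithmeticFunction.LSeriesSummable_mul (X_summable _ s hs) (X_summable _ s hs)))

lemma P_LSeries {q₁ q₂ q₃ : ℕ} [NeZero q₁] [NeZero q₂] [NeZero q₃]
    (χ₁ : DirichletCharacter ℂ q₁) (χ₂ : DirichletCharacter ℂ q₂)
    (χ₃ : DirichletCharacter ℂ q₃) (s : ℂ) (hs : 1 < s.re) :
    LSeries (fun n => P χ₁ χ₂ χ₃ n) s =
      riemannZeta s * (χ₁.LFunction s * (χ₂.LFunction s * χ₃.LFunction s)) := by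
  have s3 := ArithmeticFunction.LSeriesSummable_mul (X_summable χ₂ s hs) (X_summable χ₃ s hs)
  have s2 := ArithmeticFunction.LSeriesSummable_mul (X_summable χ₁ s hs) s3
  unfold P
  rw [ArithmeticFunction.LSeries_mul' (X_summable _ s hs) s2,
    ArithmeticFunction.LSeries_mul' (X_summable _ s hs) s3,
    ArithmeticFunction.LSeries_mul' (X_summable _ s hs) (X_summable _ s hs),
    X_LSeries _ s hs, X_LSeries _ s hs, X_LSeries _ s hs, X_LSeries _ s hs,
    DirichletCharacter.LFunction_modOne_eq]

lemma LFunction_one_pos {q : ℕ} [NeZero q] (χ : DirichletCharacter ℂ q) (hχ : χ ≠ 1)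
    (h2 : χ ^ 2 = 1) : 0 < (χ.LFunction 1).re := by
  have hne : ∀ x : ℝ, 1 ≤ x → (χ.LFunction x).re ≠ 0 := by
    intro x hx h
    have := LFunction_real χ hχ h2 x (by linarith)
    rw [h] at this
    exact χ.LFunction_ne_zero_of_one_le_re (.inl hχ) (s := x) (by simpa using hx) (by simpa using this)
  have h2pos : 0 < (χ.LFunction (2 : ℝ)).re := by
    have hs : 1 < (((2 : ℝ) : ℂ)).re := by simp
    have hL : LSeriesHasSum (fun n : ℕ => χ n) ((2 : ℝ) : ℂ) (χ.LFunction (2 : ℝ)) := by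
      rw [χ.LFunction_eq_LSeries hs]
      exact (DirichletCharacter.LSeriesSummable_of_one_lt_re χ hs).LSeriesHasSum
    have h1 := hasSum_re ((hasSum_nat_add_iff' 2).2 hL)
    have hz := (hasSum_nat_add_iff' 2).2 hasSum_zeta_two
    have hle := hasSum_le (fun n => ?_) hz.neg h1
    · simp only [Finset.sum_range_succ, Finset.sum_range_zero, LSeries.term_zero] at hle
      rw [LSeries.term_of_ne_zero one_ne_zero] at hle
      simp at hle
      have := Real.pi_lt_d2
      have := Real.pi_pos
      simp
      nlinarith
    · rw [LSeries.term_of_ne_zero (by omega)]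
      refine (abs_le.1 ((abs_re_le_norm _).trans ?_)).1
      rw [norm_div, norm_natCast_cpow_of_pos (by omega)]
      simp only [ofReal_re]
      have : ((n + 2 : ℕ) : ℝ) ^ (2 : ℝ) = ((n + 2 : ℕ) : ℝ) ^ 2 := by norm_cast
      rw [this]
      gcongr
      exact χ.norm_le_one _
  by_contra hcon
  have hcont : ContinuousOn (fun x : ℝ => (χ.LFunction x).re) (Set.Icc 1 2) := by
    have := (DirichletCharacter.differentiable_LFunction hχ).continuous
    exact (continuous_re.comp (this.comp continuous_ofReal)).continuousOn
  have := intermediate_value_Icc (by norm_num : (1 : ℝ) ≤ 2) hcont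
  obtain ⟨x, hx, hx0⟩ := this ⟨by simpa using hcon, h2pos.le⟩
  exact hne x hx.1 hx0

end Siegel

end

section
open Complex Filter Topology
open scoped ComplexOrder

namespace Siegel

/-- the entire function `(s-1)ζ(s)` -/
noncomputable def gz : ℂ → ℂ := Function.update (fun s => (s - 1) * riemannZeta s) 1 1

lemma gz_of_ne {s : ℂ} (hs : s ≠ 1) : gz s = (s - 1) * riemannZeta s := by
  simp [gz, Function.update_of_ne hs]

lemma gz_one : gz 1 = 1 := by simp [gz]

lemma gz_diff : Differentiable ℂ gz := by
  have h0 : ∀ s : ℂ, s ≠ 1 → DifferentiableAt ℂ gz s := by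
    intro s hs
    have : gz =ᶠ[𝓝 s] fun s => (s - 1) * riemannZeta s := by
      filter_upwards [isOpen_ne.mem_nhds hs] with z hz using gz_of_ne hz
    refine DifferentiableAt.congr_of_eventuallyEq ?_ this
    exact (differentiableAt_id.sub_const 1).mul (differentiableAt_riemannZeta hs)
  intro s
  rcases eq_or_ne s 1 with rfl | hs
  · refine (analyticAt_of_differentiable_on_punctured_nhds_of_continuousAt ?_ ?_).differentiableAt
    · filter_upwards [self_mem_nhdsWithin] with z hz using h0 z hz
    · unfold gz
      rw [continuousAt_update_same]
      exact riemannZeta_residue_one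
  · exact h0 s hs

lemma main_ineq : ∃ K : ℝ, 1 ≤ K ∧ ∀ (q₁ q₂ q₃ : ℕ) [NeZero q₁] [NeZero q₂] [NeZero q₃]
    (χ₁ : DirichletCharacter ℂ q₁) (χ₂ : DirichletCharacter ℂ q₂) (χ₃ : DirichletCharacter ℂ q₃),
    χ₁ ≠ 1 → χ₂ ≠ 1 → χ₃ ≠ 1 → χ₁ ^ 2 = 1 → χ₂ ^ 2 = 1 → χ₃ ^ 2 = 1 →
    (∀ n : ℕ, χ₃ n = χ₁ n * χ₂ n) → ∀ σ : ℝ, 7 / 8 ≤ σ → σ < 1 →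
    (riemannZeta σ * (χ₁.LFunction σ * (χ₂.LFunction σ * χ₃.LFunction σ))).re ≤ 0 →
    ∀ M : ℕ, 1 ≤ M → 4 * (K * ((q₁ : ℝ) * (q₂ * q₃))) * (3 / 4) ^ M ≤ 1 / 2 →
    (1 - σ) / 2 ≤ (χ₁.LFunction 1).re * ((χ₂.LFunction 1).re * (χ₃.LFunction 1).re) *
      (2 - σ) ^ M := by
  obtain ⟨K, hK1, hK⟩ := LFunction_bound
  have hne1 : ∀ s ∈ Metric.sphere (2 : ℂ) (3 / 2), s ≠ 1 := by
    rintro s hs rfl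
    rw [mem_sphere_iff_norm] at hs
    norm_num at hs
  obtain ⟨Kz, hKz⟩ := (isCompact_sphere (2 : ℂ) (3 / 2)).exists_bound_of_continuousOn
    (f := riemannZeta) (fun s hs =>
      (differentiableAt_riemannZeta (hne1 s hs)).continuousAt.continuousWithinAt)
  have hKz0 : 0 ≤ Kz := (norm_nonneg _).trans (hKz (2 + (3 / 2 : ℝ)) (by simp))
  refine ⟨(Kz + 2) * K ^ 3, ?_, ?_⟩
  · have : (1 : ℝ) ≤ K ^ 3 := one_le_pow₀ hK1
    nlinarith
  intro q₁ q₂ q₃ _ _ _ χ₁ χ₂ χ₃ n1 n2 n3 s1 s2 s3 hmul σ hσ1 hσ2 hneg M hM hMK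
  set l : ℝ := (χ₁.LFunction 1).re * ((χ₂.LFunction 1).re * (χ₃.LFunction 1).re) with hl
  set G : ℂ → ℂ := fun s => χ₁.LFunction s * (χ₂.LFunction s * χ₃.LFunction s) with hG
  have hGd : Differentiable ℂ G :=
    (DirichletCharacter.differentiable_LFunction n1).mul
      ((DirichletCharacter.differentiable_LFunction n2).mul
        (DirichletCharacter.differentiable_LFunction n3))
  have hG1 : G 1 = l := by
    have r1 := LFunction_real χ₁ n1 s1 1 one_pos
    have r2 := LFunction_real χ₂ n2 s2 1 one_pos
    have r3 := LFunction_real χ₃ n3 s3 1 one_pos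
    simp only [ofReal_one] at r1 r2 r3
    rw [hG, hl]
    simp only
    rw [r1, r2, r3]
    push_cast
    simp
  set H : ℂ → ℂ := fun s => gz s * G s with hH
  have hHd : Differentiable ℂ H := gz_diff.mul hGd
  have hH1 : H 1 = l := by rw [hH]; simp only; rw [gz_one, one_mul, hG1]
  have hfd : Differentiable ℂ (dslope H 1) := by
    rw [← differentiableOn_univ, Complex.differentiableOn_dslope Filter.univ_mem]
    exact hHd.differentiableOn
  have hf : ∀ s, s ≠ 1 → dslope H 1 s = riemannZeta s * G s - l * (s - 1)⁻¹ := by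
    intro s hs
    have hs' : s - 1 ≠ 0 := sub_ne_zero.2 hs
    rw [dslope_of_ne _ hs, slope_def_field, hH1, hH]
    simp only
    rw [gz_of_ne hs]
    field_simp
  have hGb : ∀ s : ℂ, 1 / 2 ≤ s.re → ‖s‖ ≤ 7 / 2 → ‖G s‖ ≤ K ^ 3 * ((q₁ : ℝ) * (q₂ * q₃)) := by
    intro s h1 h2
    rw [hG]
    simp only
    rw [norm_mul, norm_mul]
    calc _ ≤ (K * q₁) * ((K * q₂) * (K * q₃)) := by
          gcongr
          · exact hK _ _ n1 s h1 h2
          · exact hK _ _ n2 s h1 h2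
          · exact hK _ _ n3 s h1 h2
      _ = _ := by ring
  refine estermann (fun n => P χ₁ χ₂ χ₃ n) (P_nonneg χ₁ χ₂ χ₃ s1 s2 hmul) (P_one _ _ _)
    (P_summable _ _ _) (dslope H 1) hfd l ?_ ((Kz + 2) * K ^ 3 * ((q₁ : ℝ) * (q₂ * q₃))) ?_ σ hσ1 hσ2 ?_
    M hM hMK
  · intro s hs
    have : s ≠ 1 := by rintro rfl; simp at hs
    rw [P_LSeries _ _ _ s hs, hf s this]; ring
  · intro s hs
    have hne := hne1 s hs
    have hs' := mem_sphere_iff_norm.1 hs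
    have hre : 1 / 2 ≤ s.re := by
      have := (abs_le.1 ((abs_re_le_norm (s - 2)).trans hs'.le)).1
      simp at this; linarith
    have hnorm : ‖s‖ ≤ 7 / 2 := by
      calc ‖s‖ = ‖(s - 2) + 2‖ := by ring_nf
        _ ≤ ‖s - 2‖ + ‖(2 : ℂ)‖ := norm_add_le _ _
        _ = 7 / 2 := by rw [hs']; norm_num
    have hs1 : 1 / 2 ≤ ‖s - 1‖ := by
      have h := norm_sub_norm_le (s - 2) (-1)
      rw [hs', show s - 2 - -1 = s - 1 by ring] at h
      norm_num at h; linarith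
    have hinv : ‖(s - 1)⁻¹‖ ≤ 2 := by
      rw [norm_inv]
      exact inv_le_of_inv_le₀ (by norm_num) (by linarith)
    have hl' : ‖(l : ℂ)‖ ≤ K ^ 3 * ((q₁ : ℝ) * (q₂ * q₃)) := by
      rw [← hG1]; exact hGb 1 (by norm_num) (by norm_num)
    rw [hf s hne]
    refine (norm_sub_le _ _).trans ?_
    have b1 : ‖riemannZeta s * G s‖ ≤ Kz * (K ^ 3 * ((q₁ : ℝ) * (q₂ * q₃))) := by
      rw [norm_mul]
      exact mul_le_mul (hKz s hs) (hGb s hre hnorm) (norm_nonneg _) hKz0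
    have b2 : ‖(l : ℂ) * (s - 1)⁻¹‖ ≤ (K ^ 3 * ((q₁ : ℝ) * (q₂ * q₃))) * 2 := by
      rw [norm_mul]
      exact mul_le_mul hl' hinv (norm_nonneg _) (by positivity)
    linarith
  · have hne : (σ : ℂ) ≠ 1 := by exact_mod_cast hσ2.ne
    rw [hf _ hne, sub_re]
    have e : ((l : ℂ) * ((σ : ℂ) - 1)⁻¹) = ((l * (σ - 1)⁻¹ : ℝ) : ℂ) := by push_cast; ring
    rw [e, ofReal_re]
    have e2 : l / (1 - σ) = - (l * (σ - 1)⁻¹) := by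
      rw [← neg_sub σ 1, div_neg, div_eq_mul_inv]
    rw [e2]
    have : (riemannZeta σ * G σ).re ≤ 0 := hneg
    linarith

end Siegel

end

open Complex Filter Topology

namespace Siegel

lemma exists_mul_char {q₁ q₂ : ℕ} [NeZero q₁] [NeZero q₂] (hq : q₁ < q₂)
    (χ₁ : DirichletCharacter ℂ q₁) (χ₂ : DirichletCharacter ℂ q₂) (hp : χ₂.IsPrimitive)
    (h1 : χ₁ ^ 2 = 1) (h2 : χ₂ ^ 2 = 1) :
    ∃ χ₃ : DirichletCharacter ℂ (q₁ * q₂), χ₃ ≠ 1 ∧ χ₃ ^ 2 = 1 ∧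
      ∀ n : ℕ, χ₃ n = χ₁ n * χ₂ n := by
  have d1 : q₁ ∣ q₁ * q₂ := dvd_mul_right _ _
  have d2 : q₂ ∣ q₁ * q₂ := dvd_mul_left _ _
  refine ⟨DirichletCharacter.changeLevel d1 χ₁ * DirichletCharacter.changeLevel d2 χ₂, ?_, ?_, ?_⟩
  · intro h
    have e : DirichletCharacter.changeLevel d1 χ₁ = DirichletCharacter.changeLevel d2 χ₂ := by
      have hs : DirichletCharacter.changeLevel d2 χ₂ * DirichletCharacter.changeLevel d2 χ₂ = 1 := by
        rw [← sq, ← map_pow, h2, map_one]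
      calc _ = DirichletCharacter.changeLevel d1 χ₁ *
            (DirichletCharacter.changeLevel d2 χ₂ * DirichletCharacter.changeLevel d2 χ₂) := by
            rw [hs, mul_one]
        _ = _ := by rw [← mul_assoc, h, one_mul]
    have c := congrArg DirichletCharacter.conductor e
    rw [DirichletCharacter.conductor_changeLevel, DirichletCharacter.conductor_changeLevel,
      (DirichletCharacter.isPrimitive_def χ₂).1 hp] at c
    have := Nat.le_of_dvd (NeZero.pos q₁) χ₁.conductor_dvd_level
    omega
  · rw [mul_pow, ← map_pow, ← map_pow, h1, h2, map_one, map_one, one_mul]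
  · intro n
    rw [MulChar.mul_apply]
    by_cases hn : IsUnit (n : ZMod (q₁ * q₂))
    · obtain ⟨u, hu⟩ := hn
      rw [← hu, DirichletCharacter.changeLevel_eq_cast_of_dvd, DirichletCharacter.changeLevel_eq_cast_of_dvd,
        hu, ZMod.cast_natCast d1, ZMod.cast_natCast d2]
    · rw [MulChar.map_nonunit _ hn, zero_mul]
      rw [ZMod.isUnit_iff_coprime, Nat.coprime_mul_iff_right, not_and_or,
        ← ZMod.isUnit_iff_coprime, ← ZMod.isUnit_iff_coprime] at hn
      rcases hn with hn | hn
      · rw [χ₁.map_nonunit hn, zero_mul]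
      · rw [χ₂.map_nonunit hn, mul_zero]

lemma zeta_neg : ∃ δ : ℝ, 0 < δ ∧ ∀ σ : ℝ, 1 - δ < σ → σ < 1 → (riemannZeta σ).re < 0 := by
  have hc : Continuous (fun x : ℝ => (gz x).re) :=
    continuous_re.comp (gz_diff.continuous.comp continuous_ofReal)
  have h1 : ∀ᶠ x : ℝ in 𝓝 1, 0 < (gz x).re := by
    refine hc.continuousAt.eventually_mem (isOpen_Ioi.mem_nhds ?_)
    simp [gz_one]
  obtain ⟨δ, hδ, h⟩ := Metric.eventually_nhds_iff.1 h1
  refine ⟨δ, hδ, fun σ h2 h3 => ?_⟩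
  have := h (y := σ) (by rw [Real.dist_eq, abs_lt]; constructor <;> linarith)
  rw [gz_of_ne (by exact_mod_cast h3.ne), show (σ : ℂ) - 1 = ((σ - 1 : ℝ) : ℂ) by push_cast; ring,
    re_ofReal_mul] at this
  nlinarith

lemma small (N : ℕ) : ∃ c : ℝ, 0 < c ∧ ∀ (q : ℕ) [NeZero q], q ≤ N → ∀ χ : DirichletCharacter ℂ q,
    χ ≠ 1 → χ ^ 2 = 1 → c < (χ.LFunction 1).re := by
  induction N with
  | zero => exact ⟨1, one_pos, fun q _ hq => absurd (Nat.le_zero.1 hq) (NeZero.ne q)⟩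
  | succ N ih =>
    obtain ⟨c, hc, h⟩ := ih
    classical
    let g : DirichletCharacter ℂ (N + 1) → ℝ := fun χ =>
      if χ ≠ 1 ∧ χ ^ 2 = 1 then (χ.LFunction 1).re else 1
    have hg : ∀ χ, 0 < g χ := by
      intro χ
      simp only [g]
      split_ifs with hh
      · exact LFunction_one_pos χ hh.1 hh.2
      · exact one_pos
    obtain ⟨χ₀, h0⟩ := Finite.exists_min g
    refine ⟨min c (g χ₀ / 2), lt_min hc (half_pos (hg _)), ?_⟩
    intro q _ hq χ h1 h2
    rcases Nat.lt_or_ge q (N + 1) with hlt | hge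
    · exact (min_le_left _ _).trans_lt (h q (by omega) χ h1 h2)
    · obtain rfl : q = N + 1 := by omega
      have e : g χ = (χ.LFunction 1).re := by simp only [g]; rw [if_pos ⟨h1, h2⟩]
      have := h0 χ
      have := hg χ₀
      refine (min_le_right _ _).trans_lt ?_
      rw [← e]; linarith

lemma key (δ : ℝ) (hδ : 0 < δ) (hδ1 : δ ≤ 1 / 8)
    (hex : ∃ (q : ℕ) (_ : NeZero q) (χ : DirichletCharacter ℂ q), χ ≠ 1 ∧ χ ^ 2 = 1) :
    ∃ (q₁ : ℕ) (_ : NeZero q₁) (χ₁ : DirichletCharacter ℂ q₁) (σ : ℝ), χ₁ ≠ 1 ∧ χ₁ ^ 2 = 1 ∧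
      1 - δ ≤ σ ∧ σ < 1 ∧ ∀ (q₂ q₃ : ℕ) [NeZero q₂] [NeZero q₃]
        (χ₂ : DirichletCharacter ℂ q₂) (χ₃ : DirichletCharacter ℂ q₃),
        χ₂ ≠ 1 → χ₃ ≠ 1 → χ₂ ^ 2 = 1 → χ₃ ^ 2 = 1 →
        (riemannZeta σ * (χ₁.LFunction σ * (χ₂.LFunction σ * χ₃.LFunction σ))).re ≤ 0 := by
  by_cases hA : ∃ (q₁ : ℕ) (_ : NeZero q₁) (χ₁ : DirichletCharacter ℂ q₁) (σ : ℝ), χ₁ ≠ 1 ∧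
      χ₁ ^ 2 = 1 ∧ 1 - δ ≤ σ ∧ σ < 1 ∧ χ₁.LFunction σ = 0
  · obtain ⟨q₁, i1, χ₁, σ, h1, h2, h3, h4, h5⟩ := hA
    refine ⟨q₁, i1, χ₁, σ, h1, h2, h3, h4, ?_⟩
    intros
    rw [h5]; simp
  · obtain ⟨q₁, i1, χ₁, h1, h2⟩ := hex
    obtain ⟨δ₀, hδ₀, hz⟩ := zeta_neg
    have hσ1 : max (1 - δ) (1 - δ₀ / 2) < 1 := max_lt (by linarith) (by linarith)
    have hσ2 : 1 - δ₀ < max (1 - δ) (1 - δ₀ / 2) := lt_max_of_lt_right (by linarith)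
    have hσ3 := le_max_left (1 - δ) (1 - δ₀ / 2)
    generalize max (1 - δ) (1 - δ₀ / 2) = σ at hσ1 hσ2 hσ3
    have hpos : ∀ (q : ℕ) [NeZero q] (χ : DirichletCharacter ℂ q), χ ≠ 1 → χ ^ 2 = 1 →
        ∃ r : ℝ, 0 < r ∧ χ.LFunction σ = r := by
      intro q _ χ n1 n2
      refine ⟨(χ.LFunction σ).re, ?_, LFunction_real χ n1 n2 σ (by linarith)⟩
      by_contra hcon
      have hcont : ContinuousOn (fun x : ℝ => (χ.LFunction x).re) (Set.Icc σ 1) :=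
        (continuous_re.comp ((DirichletCharacter.differentiable_LFunction n1).continuous.comp
          continuous_ofReal)).continuousOn
      have h1pos := LFunction_one_pos χ n1 n2
      obtain ⟨x, hx, hx0⟩ := intermediate_value_Icc hσ1.le hcont
        (show (0 : ℝ) ∈ _ from ⟨by simpa using hcon, by simpa using h1pos.le⟩)
      have hx0' : (χ.LFunction x).re = 0 := hx0
      have hx1 : x < 1 := by
        refine lt_of_le_of_ne hx.2 ?_
        rintro rfl
        simp only [ofReal_one] at hx0'
        linarith
      refine hA ⟨q, inferInstance, χ, x, n1, n2, hσ3.trans hx.1, hx1, ?_⟩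
      rw [LFunction_real χ n1 n2 x (by linarith [hx.1]), hx0', ofReal_zero]
    refine ⟨q₁, i1, χ₁, σ, h1, h2, hσ3, hσ1, ?_⟩
    intro q₂ q₃ _ _ χ₂ χ₃ n2 n3 s2 s3
    obtain ⟨r1, p1, e1⟩ := hpos q₁ χ₁ h1 h2
    obtain ⟨r2, p2, e2⟩ := hpos q₂ χ₂ n2 s2
    obtain ⟨r3, p3, e3⟩ := hpos q₃ χ₃ n3 s3
    rw [e1, e2, e3, ← ofReal_mul, ← ofReal_mul, re_mul_ofReal]
    have := hz σ hσ2 hσ1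
    exact mul_nonpos_of_nonpos_of_nonneg this.le (by positivity)

lemma pow_bound (σ δ : ℝ) (h1 : 1 - δ ≤ σ) (h2 : σ < 1) (Y : ℝ) (hY : 1 ≤ Y) :
    ∃ M : ℕ, 1 ≤ M ∧ Y * (3 / 4) ^ M ≤ 1 ∧ (2 - σ) ^ M ≤ (4 / 3 * Y) ^ (4 * δ) := by
  obtain ⟨n, hn1, hn2⟩ := exists_nat_pow_near hY (by norm_num : (1 : ℝ) < 4 / 3)
  refine ⟨n + 1, by omega, ?_, ?_⟩
  · have e : (3 / 4 : ℝ) ^ (n + 1) = ((4 / 3) ^ (n + 1))⁻¹ := by rw [← inv_pow]; norm_num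
    rw [e, ← div_eq_mul_inv, div_le_one (by positivity)]
    exact hn2.le
  · have hlog : (1 / 4 : ℝ) ≤ Real.log (4 / 3) := by
      have := Real.one_sub_inv_le_log_of_pos (show (0 : ℝ) < 4 / 3 by norm_num)
      norm_num at this ⊢; linarith
    have hb : 2 - σ ≤ (4 / 3 : ℝ) ^ (4 * δ) := by
      rw [Real.rpow_def_of_pos (by norm_num)]
      have := Real.add_one_le_exp (Real.log (4 / 3) * (4 * δ))
      nlinarith
    calc (2 - σ) ^ (n + 1) ≤ ((4 / 3 : ℝ) ^ (4 * δ)) ^ (n + 1) :=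
          pow_le_pow_left₀ (by linarith) hb _
      _ = ((4 / 3 : ℝ) ^ (n + 1)) ^ (4 * δ) := by
          rw [← Real.rpow_natCast, ← Real.rpow_mul (by norm_num), mul_comm, Real.rpow_mul (by norm_num),
            Real.rpow_natCast]
      _ ≤ (4 / 3 * Y) ^ (4 * δ) := by
          refine Real.rpow_le_rpow (by positivity) ?_ (by linarith)
          rw [pow_succ]; linarith

end Siegel
open Siegel

theorem siegel_theorem (ε : ℝ) (hε : 0 < ε) :
    ∃ C : ℝ, 0 < C ∧
      ∀ (q : ℕ) (hq : 1 < q),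
        haveI : NeZero q := ⟨by omega⟩
        ∀ χ : DirichletCharacter ℂ q,
          χ.IsPrimitive → χ ≠ 1 → χ ^ 2 = 1 →
            ∃ r : ℝ, χ.LFunction 1 = (r : ℂ) ∧ C * (q : ℝ) ^ (-ε) < r := by
  by_cases hex : ∃ (q : ℕ) (_ : NeZero q) (χ : DirichletCharacter ℂ q), χ ≠ 1 ∧ χ ^ 2 = 1
  swap
  · refine ⟨1, one_pos, fun q hq χ _ h1 h2 => ?_⟩
    exact absurd ⟨q, ⟨by omega⟩, χ, h1, h2⟩ hex
  set η : ℝ := min ε 1 / 4 with hη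
  have hη0 : 0 < η := by have : 0 < min ε 1 := lt_min hε one_pos; positivity
  have hη1 : η < 1 := by have := min_le_right ε 1; linarith
  have hηε : 2 * η ≤ ε := by have := min_le_left ε 1; linarith
  obtain ⟨q₁, i1, χ₁, σ, n1, s1, hσ1, hσ2, hneg⟩ := key (η / 8) (by positivity) (by linarith) hex
  obtain ⟨K, hK1, hK⟩ := main_ineq
  obtain ⟨K', hK'0, hK'⟩ := LFunction_one_bound η hη0 hη1
  obtain ⟨c', hc', hsmall⟩ := small q₁
  have hL1 := LFunction_one_pos χ₁ n1 s1
  set L1 := (χ₁.LFunction 1).re with hL1def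
  have hq1 : (0 : ℝ) < q₁ := by exact_mod_cast NeZero.pos q₁
  set A : ℝ := (4 / 3 * (8 * K * (q₁ : ℝ) ^ 2)) ^ (4 * (η / 8)) with hA
  have hA0 : 0 < A := by positivity
  set c : ℝ := (1 - σ) / 2 / (L1 * (K' * (q₁ : ℝ) ^ η) * A) with hc
  have hc0 : 0 < c := by
    have : 0 < 1 - σ := by linarith
    positivity
  refine ⟨min (c / 2) c', lt_min (half_pos hc0) hc', ?_⟩
  intro q hq
  haveI : NeZero q := ⟨by omega⟩
  intro χ hp n2 s2
  refine ⟨(χ.LFunction 1).re, by simpa using LFunction_real χ n2 s2 1 one_pos, ?_⟩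
  have hqR : (1 : ℝ) ≤ q := by exact_mod_cast hq.le
  have hq0 : (0 : ℝ) < q := by linarith
  have hqε : (q : ℝ) ^ (-ε) ≤ 1 := Real.rpow_le_one_of_one_le_of_nonpos hqR (by linarith)
  have hqε0 : 0 < (q : ℝ) ^ (-ε) := by positivity
  have hL2 := LFunction_one_pos χ n2 s2
  rcases Nat.lt_or_ge q₁ q with hlt | hge
  swap
  · have h := hsmall q hge χ n2 s2
    calc min (c / 2) c' * (q : ℝ) ^ (-ε) ≤ c' * 1 := by gcongr; exact min_le_right _ _
      _ < _ := by linarith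
  obtain ⟨χ₃, n3, s3, h3⟩ := exists_mul_char hlt χ₁ χ hp s1 s2
  have hL3 := LFunction_one_pos χ₃ n3 s3
  have hL3b : (χ₃.LFunction 1).re ≤ K' * ((q₁ : ℝ) ^ η * (q : ℝ) ^ η) := by
    refine ((le_abs_self _).trans (abs_re_le_norm _)).trans ((hK' _ χ₃ n3).trans (le_of_eq ?_))
    push_cast
    rw [Real.mul_rpow hq1.le hq0.le]
  have hq11 : (1 : ℝ) ≤ q₁ := by exact_mod_cast NeZero.one_le
  obtain ⟨M, hM1, hM2, hM3⟩ := pow_bound σ (η / 8) hσ1 hσ2 (8 * K * (q₁ : ℝ) ^ 2 * (q : ℝ) ^ 2) (by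
    have h1 : (1 : ℝ) ≤ (q₁ : ℝ) ^ 2 := one_le_pow₀ hq11
    have h2 : (1 : ℝ) ≤ (q : ℝ) ^ 2 := one_le_pow₀ hqR
    have h3 : (1 : ℝ) ≤ 8 * K := by linarith
    exact one_le_mul_of_one_le_of_one_le (one_le_mul_of_one_le_of_one_le h3 h1) h2)
  have hmain := hK q₁ q (q₁ * q) χ₁ χ χ₃ n1 n2 n3 s1 s2 s3 h3 σ (by linarith) hσ2
    (hneg q (q₁ * q) χ χ₃ n2 n3 s2 s3) M hM1 (by push_cast; nlinarith)
  have hM4 : (2 - σ) ^ M ≤ A * (q : ℝ) ^ η := by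
    refine hM3.trans (le_of_eq ?_)
    rw [hA, ← mul_assoc (4 / 3 : ℝ), Real.mul_rpow (by positivity) (by positivity)]
    congr 1
    rw [← Real.rpow_natCast, ← Real.rpow_mul hq0.le]
    congr 1; push_cast; ring
  have hfin : (1 - σ) / 2 ≤ (χ.LFunction 1).re * (L1 * (K' * (q₁ : ℝ) ^ η) * A) * (q : ℝ) ^ (2 * η) := by
    calc _ ≤ _ := hmain
      _ ≤ L1 * ((χ.LFunction 1).re * (K' * ((q₁ : ℝ) ^ η * (q : ℝ) ^ η))) * (A * (q : ℝ) ^ η) := by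
        gcongr
        exact pow_nonneg (by linarith) M
      _ = _ := by
        rw [two_mul, Real.rpow_add hq0]; ring
  have hfin2 : c ≤ (χ.LFunction 1).re * (q : ℝ) ^ (2 * η) := by
    rw [hc, div_le_iff₀ (by positivity)]
    linarith
  have hfin3 : c * (q : ℝ) ^ (-ε) ≤ (χ.LFunction 1).re := by
    calc c * (q : ℝ) ^ (-ε) ≤ ((χ.LFunction 1).re * (q : ℝ) ^ (2 * η)) * (q : ℝ) ^ (-ε) := by gcongr
      _ = (χ.LFunction 1).re * (q : ℝ) ^ (2 * η + -ε) := by rw [Real.rpow_add hq0]; ring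
      _ ≤ (χ.LFunction 1).re * 1 := by
        gcongr
        exact Real.rpow_le_one_of_one_le_of_nonpos hqR (by linarith)
      _ = _ := mul_one _
  calc min (c / 2) c' * (q : ℝ) ^ (-ε) ≤ c / 2 * (q : ℝ) ^ (-ε) := by gcongr; exact min_le_left _ _
    _ < c * (q : ℝ) ^ (-ε) := by gcongr; linarith
    _ ≤ _ := hfin3
end

section
/- (Siegel's theorem, zero-free region form) For every ε > 0 there exists a constant C(ε) > 0 such that for every integer q > 1 and every primitive quadratic Dirichlet character χ modulo q, the Dirichlet L-function L(s,χ) has no real zero s with s > 1 − C(ε)·q^(−ε); that is, for every real s with 1 − C(ε)·q^(−ε) < s, L(s,χ) ≠ 0. -/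
section SiegelAux

open Complex Filter Topology MeasureTheory Set Asymptotics

lemma sum_range_char_bound {q : ℕ} [NeZero q] (χ : DirichletCharacter ℂ q) (hχ : χ ≠ 1) (n : ℕ) :
    ‖∑ k ∈ Finset.range n, χ (k : ZMod q)‖ ≤ q := by
  have hq : ∑ k ∈ Finset.range q, χ (k : ZMod q) = 0 := by
    rw [← MulChar.sum_eq_zero_of_ne_one hχ]
    refine Finset.sum_nbij' (fun k => (k : ZMod q)) (fun a => a.val) ?_ ?_ ?_ ?_ ?_
    · simp
    · intro a _; simpa using ZMod.val_lt a
    · intro k hk; exact ZMod.val_cast_of_lt (by simpa using hk)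
    · intro a _; simp
    · simp
  have hper : Function.Periodic (fun n : ℕ => ∑ k ∈ Finset.range n, χ (k : ZMod q)) q := by
    intro m
    induction m with
    | zero => simpa using hq
    | succ m ih =>
      simp only at ih ⊢
      rw [show m + 1 + q = (m + q) + 1 by ring, Finset.sum_range_succ, ih, Finset.sum_range_succ]
      simp
  have := hper.map_mod_nat n
  rw [← this]
  refine (norm_sum_le _ _).trans ?_
  refine (Finset.sum_le_sum (fun k _ => DirichletCharacter.norm_le_one χ _)).trans ?_
  simp only [Finset.sum_const, Finset.card_range, nsmul_eq_mul, mul_one]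
  exact_mod_cast (Nat.mod_lt _ (Nat.pos_of_ne_zero (NeZero.ne q))).le

lemma sum_Icc_char_bound {q : ℕ} [NeZero q] (hq1 : q ≠ 1) (χ : DirichletCharacter ℂ q) (hχ : χ ≠ 1) (n : ℕ) :
    ‖∑ k ∈ Finset.Icc 1 n, χ (k : ZMod q)‖ ≤ q := by
  have := sum_range_char_bound χ hχ (n+1)
  have hnt : Nontrivial (ZMod q) := ZMod.nontrivial_iff.mpr hq1
  have e : ∑ k ∈ Finset.Icc 1 n, χ (k : ZMod q) = ∑ k ∈ Finset.range (n+1), χ (k : ZMod q) := by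
    rw [Finset.sum_range_succ']
    simp only [Nat.cast_zero, MulChar.map_zero, add_zero]
    rw [← Finset.sum_image (s := Finset.range n) (g := fun k => k+1) (f := fun k : ℕ => χ (k : ZMod q)) (by intro a; simp)]
    congr 1
    ext k; simp only [Finset.mem_Icc, Finset.mem_image, Finset.mem_range]
    constructor
    · rintro ⟨h1, h2⟩; exact ⟨k-1, by omega, by omega⟩
    · rintro ⟨a, h, rfl⟩; omega
  rwa [e]

lemma sum_Icc_char_bound' {q : ℕ} [NeZero q] (χ : DirichletCharacter ℂ q) (n : ℕ) :
    ‖∑ k ∈ Finset.Icc 1 n, χ (k : ZMod q)‖ ≤ n := by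
  refine (norm_sum_le _ _).trans ?_
  refine (Finset.sum_le_sum (fun k _ => DirichletCharacter.norm_le_one χ _)).trans ?_
  simp

lemma LFunction_eq_integral {q : ℕ} [NeZero q] (χ : DirichletCharacter ℂ q) (hχ : χ ≠ 1)
    {s : ℂ} (hs : 0 < s.re) :
    χ.LFunction s = s * ∫ t in Set.Ioi (1 : ℝ),
      (∑ k ∈ Finset.Icc 1 ⌊t⌋₊, χ (k : ZMod q)) * (t : ℂ) ^ (-(s + 1)) := by
  have hq1 : q ≠ 1 := by
    rintro rfl; exact hχ (Subsingleton.elim _ _)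
  set A : ℝ → ℂ := fun t => ∑ k ∈ Finset.Icc 1 ⌊t⌋₊, χ (k : ZMod q) with hA
  have hAb : ∀ t, ‖A t‖ ≤ q := fun t => sum_Icc_char_bound hq1 χ hχ _
  have hAm : Measurable A :=
    (measurable_from_nat (f := fun n : ℕ => ∑ k ∈ Finset.Icc 1 n, χ (k : ZMod q))).comp Nat.measurable_floor
  have hA0 : ∀ t < 1, A t = 0 := by
    intro t ht
    simp [hA, Nat.floor_eq_zero.mpr ht]
  have hmel : ∀ s : ℂ, ∫ t in Set.Ioi (1 : ℝ), A t * (t : ℂ) ^ (-(s + 1)) = mellin A (-s) := by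
    intro s
    rw [mellin]
    have : ∫ t in Set.Ioi (0:ℝ), (t : ℂ) ^ (-s - 1) • A t = ∫ t in Set.Ici (1:ℝ), (t : ℂ) ^ (-s - 1) • A t := by
      refine setIntegral_eq_of_subset_of_forall_sdiff_eq_zero measurableSet_Ioi ?_ ?_
      · intro t ht; exact lt_of_lt_of_le one_pos (mem_Ici.mp ht)
      · rintro t ⟨_, ht⟩
        rw [hA0 t (by simpa using ht)]; simp
    rw [this, integral_Ici_eq_integral_Ioi]
    refine setIntegral_congr_fun measurableSet_Ioi fun t _ => ?_
    simp only [smul_eq_mul]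
    rw [mul_comm]; congr 2; ring
  have hloc : LocallyIntegrableOn A (Ioi 0) := by
    refine LocallyIntegrable.locallyIntegrableOn ?_ _
    refine (locallyIntegrable_const (q : ℝ)).mono hAm.aestronglyMeasurable ?_
    filter_upwards with t
    simpa using hAb t
  have hdiff : ∀ s : ℂ, 0 < s.re → DifferentiableAt ℂ (fun s => s * mellin A (-s)) s := by
    intro s hs
    refine differentiableAt_id.mul ?_
    have : DifferentiableAt ℂ (mellin A) (-s) := by
      refine mellin_differentiableAt_of_isBigO_rpow (a := 0) (b := -s.re - 1) hloc ?_ (by simpa using hs) ?_ (by simp)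
      · refine IsBigO.of_bound q ?_
        filter_upwards with t
        simpa using hAb t
      · refine IsBigO.of_bound 1 ?_
        filter_upwards [mem_nhdsWithin_of_mem_nhds (Iio_mem_nhds (zero_lt_one (α := ℝ)))] with t ht
        rw [hA0 t ht]; simp
    exact DifferentiableAt.comp (g := mellin A) (f := fun s : ℂ => -s) s this (by fun_prop : DifferentiableAt ℂ (fun s : ℂ => -s) s)
  have hopen : IsOpen {s : ℂ | 0 < s.re} := isOpen_lt continuous_const continuous_re
  have key : EqOn (χ.LFunction) (fun s => s * mellin A (-s)) {s : ℂ | 0 < s.re} := by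
    refine AnalyticOnNhd.eqOn_of_preconnected_of_eventuallyEq (𝕜 := ℂ) (z₀ := 2) ?_ ?_ (convex_halfSpace_re_gt 0).isPreconnected (by simp) ?_
    · exact ((DirichletCharacter.differentiable_LFunction hχ).differentiableOn.analyticOnNhd hopen)
    · exact DifferentiableOn.analyticOnNhd (fun s hs => (hdiff s hs).differentiableWithinAt) hopen
    · filter_upwards [(isOpen_lt continuous_const continuous_re).mem_nhds (show (1:ℝ) < (2:ℂ).re by simp)] with s hs
      rw [DirichletCharacter.LFunction_eq_LSeries χ hs, ← hmel]
      refine LSeries_eq_mul_integral _ (r := 0) le_rfl (by linarith [show (1:ℝ) < s.re from hs]) (DirichletCharacter.LSeriesSummable_of_one_lt_re χ hs) ?_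
      refine IsBigO.of_bound q ?_
      filter_upwards with t
      simpa using sum_Icc_char_bound hq1 χ hχ t
  rw [key hs, hmel]

lemma LFunction_bound {q : ℕ} [NeZero q] (χ : DirichletCharacter ℂ q) (hχ : χ ≠ 1)
    {δ : ℝ} (hδ : 0 < δ) (hδ2 : δ ≤ 1 / 2) {s : ℂ} (hs : 1 - δ ≤ s.re) (hs4 : ‖s‖ ≤ 4) :
    ‖χ.LFunction s‖ ≤ 4 / δ * (q : ℝ) ^ (2 * δ) := by
  have hq1 : q ≠ 1 := by
    rintro rfl; exact hχ (Subsingleton.elim _ _)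
  rw [LFunction_eq_integral χ hχ (by linarith), norm_mul]
  have hint : IntegrableOn (fun t : ℝ => (q:ℝ) ^ (2*δ) * t ^ (-1-δ)) (Ioi 1) :=
    (integrableOn_Ioi_rpow_of_lt (by linarith) one_pos).const_mul _
  have h1 : ‖∫ t in Set.Ioi (1 : ℝ),
      (∑ k ∈ Finset.Icc 1 ⌊t⌋₊, χ (k : ZMod q)) * (t : ℂ) ^ (-(s + 1))‖ ≤
      ∫ t in Set.Ioi (1 : ℝ), (q:ℝ) ^ (2*δ) * t ^ (-1-δ) := by
    refine norm_integral_le_of_norm_le hint ?_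
    filter_upwards [ae_restrict_mem measurableSet_Ioi] with t ht
    have ht1 : 1 < t := ht
    have ht0 : 0 < t := by linarith
    rw [norm_mul, Complex.norm_cpow_eq_rpow_re_of_pos ht0]
    set B := ‖∑ k ∈ Finset.Icc 1 ⌊t⌋₊, χ (k : ZMod q)‖
    have hB1 : B ≤ q := sum_Icc_char_bound hq1 χ hχ _
    have hB2 : B ≤ t := (sum_Icc_char_bound' χ _).trans (Nat.floor_le ht0.le)
    have hB0 : 0 ≤ B := norm_nonneg _
    have hB : B ≤ (q:ℝ)^(2*δ) * t^(1-2*δ) := by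
      calc B = B^(2*δ) * B^(1-2*δ) := by
            rw [← Real.rpow_add_of_nonneg hB0 (by linarith) (by linarith)]; simp
        _ ≤ _ := by
          (gcongr; linarith)
    calc B * t ^ (-(s+1)).re ≤ ((q:ℝ)^(2*δ) * t^(1-2*δ)) * t ^ (δ - 2) := by
          gcongr
          · exact ht1.le
          · simp; linarith
      _ = _ := by
          rw [mul_assoc, ← Real.rpow_add ht0]; congr 2; ring
  rw [integral_const_mul, integral_Ioi_rpow_of_lt (by linarith) one_pos] at h1
  calc _ ≤ 4 * ((q:ℝ) ^ (2*δ) * (-(1:ℝ) ^ (-1-δ+1) / (-1-δ+1))) := by gcongr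
    _ = _ := by
      rw [Real.one_rpow]; 
      have : (-1 - δ + 1) = -δ := by ring
      rw [this]; field_simp

open scoped ComplexOrder

section Coeff

open scoped LSeries.notation ArithmeticFunction.vonMangoldt

lemma log_mul_convolution (f g : ℕ → ℂ) (n : ℕ) :
    Complex.log n * (f ⍟ g) n =
      ((fun n : ℕ => Complex.log n * f n) ⍟ g) n + (f ⍟ (fun n : ℕ => Complex.log n * g n)) n := by
  simp only [LSeries.convolution_def, Finset.mul_sum, ← Finset.sum_add_distrib]
  refine Finset.sum_congr rfl fun p hp => ?_
  obtain ⟨h1, h2⟩ := Nat.mem_divisorsAntidiagonal.mp hp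
  rw [← h1] at h2 ⊢
  have hp1 : p.1 ≠ 0 := by rintro h; simp [h] at h2
  have hp2 : p.2 ≠ 0 := by rintro h; simp [h] at h2
  have : Complex.log ((p.1 * p.2 : ℕ) : ℂ) = Complex.log p.1 + Complex.log p.2 := by
    rw [← Complex.natCast_log, ← Complex.natCast_log, ← Complex.natCast_log, Nat.cast_mul, Real.log_mul (by exact_mod_cast hp1) (by exact_mod_cast hp2)]
    push_cast; rfl
  rw [this]; ring

lemma conv_assoc (f g h : ℕ → ℂ) : (f ⍟ g) ⍟ h = f ⍟ (g ⍟ h) := by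
  simp [LSeries.convolution, mul_assoc]

lemma conv_comm (f g : ℕ → ℂ) : f ⍟ g = g ⍟ f := by
  simp [LSeries.convolution, mul_comm]

lemma conv_add (f g h : ℕ → ℂ) : f ⍟ (g + h) = f ⍟ g + f ⍟ h := by
  ext n
  simp [LSeries.convolution_def, mul_add, Finset.sum_add_distrib]

/-- If `log f = f ⍟ K` and `log g = g ⍟ K'`, then the same for the convolution. -/
lemma log_conv_of {f g K K' : ℕ → ℂ} (hf : (fun n : ℕ => Complex.log n * f n) = f ⍟ K)
    (hg : (fun n : ℕ => Complex.log n * g n) = g ⍟ K') :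
    (fun n : ℕ => Complex.log n * (f ⍟ g) n) = (f ⍟ g) ⍟ (K + K') := by
  ext n
  rw [log_mul_convolution, hf, hg, conv_add, Pi.add_apply]
  rw [conv_assoc, conv_comm K g, conv_assoc, conv_assoc]

lemma log_char {N : ℕ} (χ : DirichletCharacter ℂ N) :
    (fun n : ℕ => Complex.log n * χ n) = (fun n : ℕ => χ n) ⍟ (fun n : ℕ => χ n * (Λ n : ℂ)) := by
  have := χ.convolution_twist_vonMangoldt
  rw [conv_comm] at this
  refine Eq.trans ?_ this.symm
  ext n; simp [mul_comm]

lemma nonneg_of_log_conv {f K : ℕ → ℂ} (h : (fun n : ℕ => Complex.log n * f n) = f ⍟ K)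
    (hK : ∀ n, 0 ≤ K n) (hK1 : K 1 = 0) (f0 : 0 ≤ f 0) (f1 : 0 ≤ f 1) : ∀ n, 0 ≤ f n := by
  intro n
  induction n using Nat.strong_induction_on with
  | _ n ih =>
    rcases Nat.lt_or_ge n 2 with hn | hn
    · interval_cases n <;> assumption
    have h1 : 0 ≤ Complex.log n * f n := by
      rw [congrFun h n, LSeries.convolution_def]
      refine Finset.sum_nonneg fun p hp => ?_
      obtain ⟨h1, h2⟩ := Nat.mem_divisorsAntidiagonal.mp hp
      by_cases hp2 : p.2 = 1
      · simp [hp2, hK1]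
      refine mul_nonneg (ih _ ?_) (hK _)
      have hp1 : p.1 ≠ 0 := by rintro h; simp [h] at h1; omega
      have hp2' : p.2 ≠ 0 := by rintro h; simp [h] at h1; omega
      rw [← h1]
      have : 2 ≤ p.2 := by omega
      nlinarith [Nat.pos_of_ne_zero hp1]
    have hl : 0 < Real.log n := Real.log_pos (by exact_mod_cast hn)
    rw [← Complex.natCast_log] at h1
    have hl' : (0:ℂ) ≤ ((Real.log n)⁻¹ : ℝ) := by exact_mod_cast (inv_pos.mpr hl).le
    have := mul_nonneg hl' h1
    rwa [← mul_assoc, ← Complex.ofReal_mul, inv_mul_cancel₀ hl.ne', Complex.ofReal_one, one_mul] at this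

lemma char_mod_one (a : ZMod 1) : (1 : DirichletCharacter ℂ 1) a = 1 := by
  rw [Subsingleton.elim a 1, map_one]

/-- coefficients -/
noncomputable def cF {q₁ q₂ : ℕ} (χ₁ : DirichletCharacter ℂ q₁) (χ₂ : DirichletCharacter ℂ q₂)
    (ψ : DirichletCharacter ℂ (q₁ * q₂)) : ℕ → ℂ :=
  (((fun n : ℕ => (1 : DirichletCharacter ℂ 1) n) ⍟ (fun n : ℕ => χ₁ n)) ⍟ (fun n : ℕ => χ₂ n)) ⍟ (fun n : ℕ => ψ n)

lemma quad_one_add_nonneg {q : ℕ} {χ : DirichletCharacter ℂ q} (h : χ ^ 2 = 1) (a : ZMod q) : 0 ≤ 1 + χ a := by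
  rcases MulChar.isQuadratic_iff_sq_eq_one.mpr h a with h | h | h <;> rw [h] <;> norm_num

lemma cF_nonneg {q₁ q₂ : ℕ} {χ₁ : DirichletCharacter ℂ q₁} {χ₂ : DirichletCharacter ℂ q₂}
    {ψ : DirichletCharacter ℂ (q₁ * q₂)} (h₁ : χ₁ ^ 2 = 1) (h₂ : χ₂ ^ 2 = 1)
    (hψ : ∀ n : ℕ, ψ n = χ₁ n * χ₂ n) (n : ℕ) : 0 ≤ cF χ₁ χ₂ ψ n := by
  have key := log_conv_of (log_conv_of (log_conv_of (log_char (1 : DirichletCharacter ℂ 1)) (log_char χ₁)) (log_char χ₂)) (log_char ψ)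
  refine nonneg_of_log_conv (f := cF χ₁ χ₂ ψ) key ?_ ?_ ?_ ?_ n
  · intro n
    have : (0:ℂ) ≤ (Λ n : ℂ) * ((1 + χ₁ n) * (1 + χ₂ n)) := by
      refine mul_nonneg (by exact_mod_cast ArithmeticFunction.vonMangoldt_nonneg) (mul_nonneg (quad_one_add_nonneg h₁ _) (quad_one_add_nonneg h₂ _))
    convert this using 1
    simp only [Pi.add_apply, hψ]
    rw [char_mod_one]; ring
  · simp
  · simp [cF]
  · simp [cF, LSeries.convolution_def, char_mod_one]

lemma cF_one {q₁ q₂ : ℕ} {χ₁ : DirichletCharacter ℂ q₁} {χ₂ : DirichletCharacter ℂ q₂}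
    {ψ : DirichletCharacter ℂ (q₁ * q₂)} : cF χ₁ χ₂ ψ 1 = 1 := by
  simp [cF, LSeries.convolution_def, char_mod_one]

lemma cF_summable {q₁ q₂ : ℕ} (χ₁ : DirichletCharacter ℂ q₁) (χ₂ : DirichletCharacter ℂ q₂)
    (ψ : DirichletCharacter ℂ (q₁ * q₂)) {s : ℂ} (hs : 1 < s.re) : LSeriesSummable (cF χ₁ χ₂ ψ) s :=
  (((DirichletCharacter.LSeriesSummable_of_one_lt_re _ hs).convolution
   (DirichletCharacter.LSeriesSummable_of_one_lt_re _ hs)).convolution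
   (DirichletCharacter.LSeriesSummable_of_one_lt_re _ hs)).convolution
   (DirichletCharacter.LSeriesSummable_of_one_lt_re _ hs)

lemma cF_LSeries {q₁ q₂ : ℕ} [NeZero q₁] [NeZero q₂] (χ₁ : DirichletCharacter ℂ q₁) (χ₂ : DirichletCharacter ℂ q₂)
    (ψ : DirichletCharacter ℂ (q₁ * q₂)) {s : ℂ} (hs : 1 < s.re) :
    LSeries (cF χ₁ χ₂ ψ) s = riemannZeta s * χ₁.LFunction s * χ₂.LFunction s * ψ.LFunction s := by
  have s0 := DirichletCharacter.LSeriesSummable_of_one_lt_re (1 : DirichletCharacter ℂ 1) hs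
  have s1 := DirichletCharacter.LSeriesSummable_of_one_lt_re χ₁ hs
  have s2 := DirichletCharacter.LSeriesSummable_of_one_lt_re χ₂ hs
  have s3 := DirichletCharacter.LSeriesSummable_of_one_lt_re ψ hs
  rw [cF, LSeries_convolution' ((s0.convolution s1).convolution s2) s3, LSeries_convolution' (s0.convolution s1) s2,
    LSeries_convolution' s0 s1, ← DirichletCharacter.LFunction_eq_LSeries _ hs, ← DirichletCharacter.LFunction_eq_LSeries _ hs, ← DirichletCharacter.LFunction_eq_LSeries _ hs, ← DirichletCharacter.LFunction_eq_LSeries _ hs, DirichletCharacter.LFunction_modOne_eq]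

lemma cF_abscissa {q₁ q₂ : ℕ} (χ₁ : DirichletCharacter ℂ q₁) (χ₂ : DirichletCharacter ℂ q₂)
    (ψ : DirichletCharacter ℂ (q₁ * q₂)) : LSeries.abscissaOfAbsConv (cF χ₁ χ₂ ψ) < ((2:ℝ) : EReal) := by
  refine lt_of_le_of_lt (LSeriesSummable.abscissaOfAbsConv_le (s := ((3/2 : ℝ) : ℂ)) (cF_summable _ _ _ (by simp; norm_num))) ?_
  simp only [Complex.ofReal_re]
  exact_mod_cast (by norm_num : (3/2:ℝ) < 2)

lemma cF_two {q₁ q₂ : ℕ} {χ₁ : DirichletCharacter ℂ q₁} {χ₂ : DirichletCharacter ℂ q₂}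
    {ψ : DirichletCharacter ℂ (q₁ * q₂)} (h₁ : χ₁ ^ 2 = 1) (h₂ : χ₂ ^ 2 = 1)
    (hψ : ∀ n : ℕ, ψ n = χ₁ n * χ₂ n) : 1 ≤ LSeries (cF χ₁ χ₂ ψ) 2 := by
  have hs := cF_summable χ₁ χ₂ ψ (s := 2) (by simp)
  have := hs.le_tsum 1 (fun n _ => by
    have := LSeries.term_nonneg (cF_nonneg h₁ h₂ hψ n) 2
    simpa using this)
  refine le_trans (le_of_eq ?_) this
  simp [LSeries.term, cF_one]

end Coeff

lemma analytic_core {P f : ℂ → ℂ} (hP : Differentiable ℂ P) (hf : ∀ s, s ≠ 1 → f s = P s / (s - 1))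
    {B : ℝ} (hB : ∀ s ∈ Metric.sphere (2:ℂ) (3/2), ‖(P s - P 1) / (s - 1)‖ ≤ B)
    (hpos : ∀ m : ℕ, 0 ≤ (-1) ^ m * iteratedDeriv m f 2) (h2 : 1 ≤ f 2)
    {β : ℝ} (hβ : 7 / 8 ≤ β) (hβ1 : β < 1) (hPβ : P β = 0) {M : ℕ} (hM0 : 0 < M) (hM : 4 * B * (3/4) ^ M ≤ 1/2) :
    (1 - β) / 2 ≤ ‖P 1‖ * (2 - β) ^ M := by
  set H : ℂ → ℂ := dslope P 1 with hH
  have hHd : Differentiable ℂ H := by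
    rw [← differentiableOn_univ]
    exact (Complex.differentiableOn_dslope univ_mem).mpr hP.differentiableOn
  have hHs : ∀ s, s ≠ 1 → H s = (P s - P 1) / (s - 1) := by
    intro s hs
    rw [hH, dslope_of_ne _ hs, slope_def_field]
  have hfd : ContDiffAt ℂ ⊤ f 2 := by
    have hU : IsOpen {s : ℂ | s ≠ 1} := isOpen_ne
    have : DifferentiableOn ℂ f {s : ℂ | s ≠ 1} := by
      refine DifferentiableOn.congr (f := fun s => P s / (s - 1)) ?_ hf
      intro s hs
      exact (DifferentiableAt.fun_div (d := fun s => s - 1) hP.differentiableAt (by fun_prop) (sub_ne_zero.mpr hs)).differentiableWithinAt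
    exact (this.analyticAt (hU.mem_nhds (by simp))).contDiffAt
  have hid : ∀ m : ℕ, iteratedDeriv m H 2 = iteratedDeriv m f 2 - P 1 * ((-1) ^ m * m.factorial) := by
    intro m
    have e : H =ᶠ[𝓝 2] fun s => f s - P 1 * (fun z : ℂ => z⁻¹) (s - 1) := by
      filter_upwards [isOpen_ne.mem_nhds (show (2:ℂ) ≠ 1 by simp)] with s hs
      rw [hHs s hs, hf s hs, sub_div, div_eq_mul_inv (P 1)]
    rw [e.iteratedDeriv_eq]
    have hinv : ContDiffAt ℂ ⊤ (fun s : ℂ => (fun z : ℂ => z⁻¹) (s - 1)) 2 := by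
      refine ContDiffAt.inv (by fun_prop) (by norm_num)
    rw [iteratedDeriv_fun_sub (hfd.of_le le_top) ((contDiffAt_const.mul hinv).of_le le_top)]
    congr 1
    rw [iteratedDeriv_const_mul_field, iteratedDeriv_comp_sub_const, iteratedDeriv_eq_iterate]
    simp only [iter_deriv_inv]
    norm_num
  set x : ℝ := 2 - β with hx
  set b : ℕ → ℂ := fun m => (m.factorial : ℂ)⁻¹ * ((-1) ^ m * iteratedDeriv m f 2) with hb
  have hb0 : ∀ m, 0 ≤ (b m).re := by
    intro m
    have h1 : (0:ℂ) ≤ (m.factorial : ℂ)⁻¹ := by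
      have : (0:ℂ) ≤ (((m.factorial : ℝ)⁻¹ : ℝ) : ℂ) := by
        exact_mod_cast (by positivity)
      simp
    exact (Complex.le_def.mp (mul_nonneg h1 (hpos m))).1
  have hb1 : 1 ≤ (b 0).re := by
    have := (Complex.le_def.mp h2).1
    simpa [hb] using this
  have hsum : HasSum (fun m : ℕ => (x : ℂ) ^ m * (b m - P 1)) (H β) := by
    have := Complex.hasSum_taylorSeries_on_ball (f := H) (c := 2) (r := 3) (z := β) hHd.differentiableOn (by
      rw [Metric.mem_ball, Complex.dist_eq, show (β:ℂ) - 2 = ((β - 2 : ℝ) : ℂ) by push_cast; rfl, Complex.norm_real, Real.norm_eq_abs, abs_lt]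
      constructor <;> linarith)
    refine (congrArg (fun g => HasSum g (H β)) ?_).mpr this
    funext m
    rw [hid, hb, hx]
    simp only [smul_eq_mul]
    have e1 : ((β:ℂ) - 2) ^ m = (-1) ^ m * ((2 - β : ℝ) : ℂ) ^ m := by
      rw [← mul_pow]; push_cast; congr 1; ring
    have e2 : ((-1:ℂ) ^ m) * (-1) ^ m = 1 := by rw [← mul_pow]; simp
    have e3 : (m.factorial : ℂ)⁻¹ * m.factorial = 1 := inv_mul_cancel₀ (by exact_mod_cast m.factorial_ne_zero)
    rw [e1]
    linear_combination (-(P 1) * ((2 - β : ℝ) : ℂ) ^ m) * e2 * 0 + (P 1 * ((2 - β : ℝ) : ℂ) ^ m) * e3 * ((-1:ℂ) ^ m) * (-1) ^ m + P 1 * ((2 - β : ℝ) : ℂ) ^ m * e2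
  have hB0 : 0 ≤ B := (norm_nonneg _).trans (hB (2 + 3/2) (by simp))
  have hterm : ∀ m : ℕ, ‖(x : ℂ) ^ m * (b m - P 1)‖ ≤ B * (3/4) ^ m := by
    intro m
    have hc := Complex.norm_iteratedDeriv_le_of_forall_mem_sphere_norm_le (c := 2) (R := 3/2) (C := B) (f := H) m (by norm_num) hHd.diffContOnCl (by
      intro s hs
      rw [hHs s ?_]
      · exact hB s hs
      · rintro rfl
        rw [Metric.mem_sphere, Complex.dist_eq] at hs
        norm_num at hs)
    have e : b m - P 1 = (m.factorial : ℂ)⁻¹ * (-1) ^ m * iteratedDeriv m H 2 := by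
      have e2 : ((-1:ℂ) ^ m) * (-1) ^ m = 1 := by rw [← mul_pow]; simp
      have e3 : (m.factorial : ℂ)⁻¹ * m.factorial = 1 := inv_mul_cancel₀ (by exact_mod_cast m.factorial_ne_zero)
      rw [hid, hb]; simp only
      linear_combination (P 1) * e3 * ((-1:ℂ) ^ m) * (-1) ^ m + P 1 * e2
    rw [e, norm_mul, norm_mul, norm_mul, norm_pow, norm_pow, norm_inv, Complex.norm_natCast, norm_neg, norm_one, one_pow, mul_one, Complex.norm_real, Real.norm_eq_abs, abs_of_pos (by linarith)]
    have hfac : (0:ℝ) < m.factorial := by exact_mod_cast m.factorial_pos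
    calc x ^ m * ((m.factorial : ℝ)⁻¹ * ‖iteratedDeriv m H 2‖) ≤ (9/8) ^ m * ((m.factorial : ℝ)⁻¹ * (m.factorial * B / (3/2) ^ m)) := by
          gcongr
          · linarith
          · linarith
      _ = B * ((9/8) ^ m / (3/2) ^ m) := by field_simp
      _ = _ := by rw [← div_pow]; norm_num
  have htail := norm_sub_le_of_geometric_bound_of_hasSum (by norm_num) hterm hsum M
  have hHβ : ‖H β‖ = ‖P 1‖ / (1 - β) := by
    rw [hHs _ (by exact_mod_cast hβ1.ne), hPβ, norm_div, zero_sub, norm_neg,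
      show (β:ℂ) - 1 = ((β - 1 : ℝ) : ℂ) by push_cast; rfl, Complex.norm_real, Real.norm_eq_abs, abs_of_neg (by linarith)]
    ring_nf
  have hS : 1 - ‖P 1‖ * ∑ m ∈ Finset.range M, x ^ m ≤ (∑ m ∈ Finset.range M, (x : ℂ) ^ m * (b m - P 1)).re := by
    have e : (∑ m ∈ Finset.range M, (x : ℂ) ^ m * (b m - P 1)).re = ∑ m ∈ Finset.range M, x ^ m * (b m).re - (P 1).re * ∑ m ∈ Finset.range M, x ^ m := by
      rw [Complex.re_sum, Finset.mul_sum, ← Finset.sum_sub_distrib]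
      refine Finset.sum_congr rfl fun m _ => ?_
      rw [← Complex.ofReal_pow, Complex.re_ofReal_mul, Complex.sub_re]; ring
    rw [e]
    have h1 : 1 ≤ ∑ m ∈ Finset.range M, x ^ m * (b m).re := by
      have := Finset.single_le_sum (f := fun m => x ^ m * (b m).re) (s := Finset.range M) (fun m _ => mul_nonneg (pow_nonneg (by linarith) _) (hb0 m)) (Finset.mem_range.mpr hM0)
      refine le_trans ?_ this
      simpa using hb1
    have h2 : (P 1).re * ∑ m ∈ Finset.range M, x ^ m ≤ ‖P 1‖ * ∑ m ∈ Finset.range M, x ^ m := by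
      refine mul_le_mul_of_nonneg_right (Complex.re_le_norm _) (Finset.sum_nonneg fun m _ => pow_nonneg (by linarith) _)
    linarith
  have hre : (∑ m ∈ Finset.range M, (x : ℂ) ^ m * (b m - P 1)).re ≤ 1/2 + ‖P 1‖ / (1 - β) := by
    refine (Complex.re_le_norm _).trans ?_
    rw [← hHβ]
    have := norm_le_norm_sub_add (∑ m ∈ Finset.range M, (x : ℂ) ^ m * (b m - P 1)) (H β)
    have h3 : B * (3/4) ^ M / (1 - 3/4) = 4 * B * (3/4)^M := by ring
    linarith
  have hgeo : ∑ m ∈ Finset.range M, x ^ m = (x ^ M - 1) / (1 - β) := by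
    rw [geom_sum_eq (by linarith)]; congr 1; linarith
  rw [hgeo] at hS
  have hpos : 0 < 1 - β := by linarith
  have h5 : 1 / 2 ≤ ‖P 1‖ * x ^ M / (1 - β) := by
    have : ‖P 1‖ * x ^ M / (1 - β) = ‖P 1‖ * ((x ^ M - 1) / (1 - β)) + ‖P 1‖ / (1 - β) := by ring
    linarith
  rw [le_div_iff₀ hpos] at h5
  linarith

lemma choose_M {K Q u : ℝ} (hK : 1 ≤ K) (hQ : 1 ≤ Q) (hu : 0 < u) (hu8 : u ≤ 1 / 8) :
    ∃ M : ℕ, 0 < M ∧ 4 * (K * Q ^ 2) * (3/4) ^ M ≤ 1/2 ∧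
      (1 + u) ^ M ≤ Real.exp 1 * (8 * K) * Q ^ (8 * u) := by
  set B := K * Q ^ 2 with hB
  have hB1 : 1 ≤ B := by nlinarith
  have hB8 : (0:ℝ) < 8 * B := by linarith
  have hlog : 0 < Real.log (8 * B) := Real.log_pos (by linarith)
  refine ⟨⌈4 * Real.log (8 * B)⌉₊, Nat.ceil_pos.mpr (by linarith), ?_, ?_⟩
  · set M := ⌈4 * Real.log (8 * B)⌉₊
    have hM : 4 * Real.log (8 * B) ≤ M := Nat.le_ceil _
    have h1 : ((3:ℝ)/4) ^ M ≤ Real.exp (-(1/4)) ^ M := by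
      gcongr
      have := Real.add_one_le_exp (-(1/4) : ℝ)
      linarith
    have h2 : Real.exp (-(1/4)) ^ M ≤ (8 * B)⁻¹ := by
      rw [← Real.exp_nat_mul, ← Real.exp_log (inv_pos.mpr hB8), Real.exp_le_exp, Real.log_inv]
      linarith
    calc 4 * B * (3/4) ^ M ≤ 4 * B * (8 * B)⁻¹ := by
          gcongr; exact h1.trans h2
      _ = 1/2 := by field_simp; norm_num
  · set M := ⌈4 * Real.log (8 * B)⌉₊
    have hM : (M:ℝ) ≤ 4 * Real.log (8 * B) + 1 := (Nat.ceil_lt_add_one (by linarith)).le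
    have h1 : (1 + u) ^ M ≤ Real.exp u ^ M := by
      gcongr
      have := Real.add_one_le_exp u
      linarith
    have h2 : Real.exp u ^ M ≤ Real.exp (1 + (4 * u) * Real.log (8 * B)) := by
      rw [← Real.exp_nat_mul, Real.exp_le_exp]
      nlinarith
    have h3 : Real.exp (1 + (4 * u) * Real.log (8 * B)) = Real.exp 1 * (8 * B) ^ (4 * u) := by
      rw [Real.exp_add, Real.rpow_def_of_pos hB8, mul_comm (4 * u)]
    have h4 : (8 * B) ^ (4 * u) = (8 * K) ^ (4 * u) * Q ^ (8 * u) := by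
      rw [hB, ← mul_assoc, Real.mul_rpow (by positivity) (by positivity), ← Real.rpow_natCast, ← Real.rpow_mul (by positivity)]
      congr 2; push_cast; ring
    have h5 : (8 * K) ^ (4 * u) ≤ 8 * K := by
      calc (8 * K) ^ (4 * u) ≤ (8 * K) ^ (1:ℝ) := by
            apply Real.rpow_le_rpow_of_exponent_le <;> linarith
        _ = _ := Real.rpow_one _
    calc (1 + u) ^ M ≤ Real.exp 1 * (8 * B) ^ (4 * u) := by
          rw [← h3]; exact h1.trans h2
      _ = Real.exp 1 * (8 * K) ^ (4 * u) * Q ^ (8 * u) := by rw [h4]; ring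
      _ ≤ _ := by gcongr

lemma estermann : ∃ c : ℝ, 0 < c ∧ ∀ (q₁ q₂ : ℕ) [NeZero q₁] [NeZero q₂]
    (χ₁ : DirichletCharacter ℂ q₁) (χ₂ : DirichletCharacter ℂ q₂)
    (ψ : DirichletCharacter ℂ (q₁ * q₂)), χ₁ ≠ 1 → χ₂ ≠ 1 → ψ ≠ 1 → χ₁ ^ 2 = 1 → χ₂ ^ 2 = 1 →
    (∀ n : ℕ, ψ n = χ₁ n * χ₂ n) → ∀ β : ℝ, 7 / 8 ≤ β → β < 1 → χ₁.LFunction β = 0 →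
    c * (1 - β) * ((q₁ * q₂ : ℕ) : ℝ) ^ (-(8 * (1 - β))) ≤
      ‖χ₁.LFunction 1‖ * ‖χ₂.LFunction 1‖ * ‖ψ.LFunction 1‖ := by
  set W : ℂ → ℂ := DirichletCharacter.LFunctionTrivChar₁ 1 with hW
  have hWd : Differentiable ℂ W := DirichletCharacter.differentiable_LFunctionTrivChar₁ 1
  have hW1 : W 1 = 1 := by simp [hW, DirichletCharacter.LFunctionTrivChar₁]
  have hWs : ∀ s, s ≠ 1 → W s = (s - 1) * riemannZeta s := by
    intro s hs
    simp [hW, DirichletCharacter.LFunctionTrivChar₁, Function.update_of_ne hs, DirichletCharacter.LFunctionTrivChar]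
  obtain ⟨w, hw⟩ := (isCompact_sphere (2:ℂ) (3/2)).exists_bound_of_continuousOn hWd.continuous.continuousOn
  have hw0 : 0 ≤ w := (norm_nonneg _).trans (hw (2 + 3/2) (by simp))
  set K : ℝ := 1024 * (w + 1) with hK
  have hK1 : 1 ≤ K := by linarith
  refine ⟨1 / (2 * (Real.exp 1 * (8 * K))), by positivity, ?_⟩
  intro q₁ q₂ _ _ χ₁ χ₂ ψ n₁ n₂ n₃ h₁ h₂ hψ β hβ hβ1 hzero
  set Q : ℝ := ((q₁ * q₂ : ℕ) : ℝ) with hQ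
  have hQ1 : 1 ≤ Q := by
    rw [hQ]; exact_mod_cast Nat.one_le_iff_ne_zero.mpr (NeZero.ne (q₁ * q₂))
  obtain ⟨M, hM0, hM1, hM2⟩ := choose_M hK1 hQ1 (u := 1 - β) (by linarith) (by linarith)
  set P : ℂ → ℂ := fun s => W s * χ₁.LFunction s * χ₂.LFunction s * ψ.LFunction s with hP
  set f : ℂ → ℂ := fun s => riemannZeta s * χ₁.LFunction s * χ₂.LFunction s * ψ.LFunction s with hf
  have hPd : Differentiable ℂ P :=
    ((hWd.mul (DirichletCharacter.differentiable_LFunction n₁)).mul (DirichletCharacter.differentiable_LFunction n₂)).mul (DirichletCharacter.differentiable_LFunction n₃)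
  have hfP : ∀ s, s ≠ 1 → f s = P s / (s - 1) := by
    intro s hs
    have : s - 1 ≠ 0 := sub_ne_zero.mpr hs
    simp only [hf, hP]
    rw [hWs s hs]; field_simp
  have hbd : ∀ s : ℂ, 1/2 ≤ s.re → ‖s‖ ≤ 4 → ‖χ₁.LFunction s * χ₂.LFunction s * ψ.LFunction s‖ ≤ 512 * Q ^ 2 := by
    intro s hs hs4
    have b1 := LFunction_bound χ₁ n₁ (δ := 1/2) (by norm_num) le_rfl (s := s) (by linarith) hs4
    have b2 := LFunction_bound χ₂ n₂ (δ := 1/2) (by norm_num) le_rfl (s := s) (by linarith) hs4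
    have b3 := LFunction_bound ψ n₃ (δ := 1/2) (by norm_num) le_rfl (s := s) (by linarith) hs4
    have e : (2:ℝ) * (1/2) = 1 := by norm_num
    rw [e, Real.rpow_one] at b1 b2 b3
    rw [norm_mul, norm_mul]
    calc _ ≤ (4 / (1/2) * q₁) * (4 / (1/2) * q₂) * (4 / (1/2) * Q) := by gcongr
      _ = 512 * Q ^ 2 := by rw [hQ]; push_cast; ring
  have hLP : ∀ s ∈ Metric.sphere (2:ℂ) (3/2), ‖(P s - P 1) / (s - 1)‖ ≤ K * Q ^ 2 := by
    intro s hs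
    have hws := hw s hs
    rw [Metric.mem_sphere, Complex.dist_eq] at hs
    have hre : 1/2 ≤ s.re := by
      have := (abs_le.mp ((Complex.abs_re_le_norm (s - 2)).trans hs.le)).1
      simp at this; linarith
    have hn4 : ‖s‖ ≤ 4 := by
      have := norm_add_le (s - 2) 2
      rw [hs] at this; simp at this; linarith
    have hd : 1/2 ≤ ‖s - 1‖ := by
      have := norm_sub_norm_le (s - 2) (-1)
      rw [hs] at this; simp at this
      have e : s - 2 + 1 = s - 1 := by ring
      rw [e] at this; linarith
    have p1 : ‖P s‖ ≤ w * (512 * Q ^ 2) := by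
      have : P s = W s * (χ₁.LFunction s * χ₂.LFunction s * ψ.LFunction s) := by simp only [hP]; ring
      rw [this, norm_mul]
      gcongr
      exact hbd s hre hn4
    have p2 : ‖P 1‖ ≤ 512 * Q ^ 2 := by
      have : P 1 = χ₁.LFunction 1 * χ₂.LFunction 1 * ψ.LFunction 1 := by simp only [hP, hW1]; ring
      rw [this]
      exact hbd 1 (by norm_num) (by norm_num)
    rw [norm_div, div_le_iff₀ (by linarith)]
    calc ‖P s - P 1‖ ≤ ‖P s‖ + ‖P 1‖ := norm_sub_le _ _
      _ ≤ K * Q ^ 2 * (1/2) := by rw [hK]; linarith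
      _ ≤ _ := by gcongr
  have heq : f =ᶠ[𝓝 2] LSeries (cF χ₁ χ₂ ψ) := by
    filter_upwards [(isOpen_lt continuous_const continuous_re).mem_nhds (show (1:ℝ) < (2:ℂ).re by simp)] with s hs
    exact (cF_LSeries χ₁ χ₂ ψ hs).symm
  have key := analytic_core hPd hfP hLP (fun m => by
      rw [heq.iteratedDeriv_eq]
      have := LSeries.iteratedDeriv_alternating (cF_nonneg h₁ h₂ hψ) (cF_abscissa χ₁ χ₂ ψ) m
      simpa using this) (by rw [heq.eq_of_nhds]; exact cF_two h₁ h₂ hψ) hβ hβ1 (by simp [hP, hzero]) hM0 hM1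
  have hP1 : ‖P 1‖ = ‖χ₁.LFunction 1‖ * ‖χ₂.LFunction 1‖ * ‖ψ.LFunction 1‖ := by
    simp only [hP, hW1, norm_mul]; simp
  rw [← hP1]
  rw [show 2 - β = 1 + (1 - β) by ring] at key
  have hQp : 0 < Q ^ (8 * (1 - β)) := Real.rpow_pos_of_pos (by linarith) _
  rw [Real.rpow_neg (by linarith)]
  have k2 : (1 - β) / 2 ≤ ‖P 1‖ * (Real.exp 1 * (8 * K) * Q ^ (8 * (1 - β))) := key.trans (by gcongr)
  rw [show 1 / (2 * (Real.exp 1 * (8 * K))) * (1 - β) * (Q ^ (8 * (1 - β)))⁻¹ = ((1 - β) / 2) / (Real.exp 1 * (8 * K) * Q ^ (8 * (1 - β))) by field_simp]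
  rw [div_le_iff₀ (by positivity)]
  exact k2

lemma LFunction_one_le {q : ℕ} [NeZero q] (χ : DirichletCharacter ℂ q) (hχ : χ ≠ 1)
    {δ : ℝ} (hδ : 0 < δ) (hδ2 : δ ≤ 1 / 2) {β : ℝ} (hβ : 1 - δ / 2 ≤ β) (hβ1 : β < 1)
    (hz : χ.LFunction β = 0) :
    ‖χ.LFunction 1‖ ≤ 4 / δ * (q : ℝ) ^ (2 * δ) / (δ / 2) * (1 - β) := by
  set S : Set ℂ := {z : ℂ | 1 - δ / 2 ≤ z.re} ∩ Metric.closedBall 0 1 with hS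
  have hconv : Convex ℝ S := (convex_halfSpace_re_ge _).inter (convex_closedBall _ _)
  have hd := DirichletCharacter.differentiable_LFunction hχ
  have h1 := hconv.norm_image_sub_le_of_norm_deriv_le (𝕜 := ℂ) (f := χ.LFunction) (x := β) (y := 1)
    (C := 4 / δ * (q : ℝ) ^ (2 * δ) / (δ / 2)) (fun z _ => hd z) (by
      rintro z ⟨hz1, hz2⟩
      refine Complex.norm_deriv_le_of_forall_mem_sphere_norm_le (by linarith) hd.diffContOnCl ?_
      intro s hs
      rw [Metric.mem_sphere, Complex.dist_eq] at hs
      have hz1 : 1 - δ / 2 ≤ z.re := hz1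
      have hz2 : ‖z‖ ≤ 1 := by simpa using hz2
      refine LFunction_bound χ hχ hδ hδ2 ?_ ?_
      · have := (abs_le.mp ((Complex.abs_re_le_norm (s - z)).trans hs.le)).1
        simp at this; linarith
      · have := norm_add_le (s - z) z
        rw [hs] at this; simp at this; linarith)
    ⟨by simpa using hβ, by
      simp only [Metric.mem_closedBall, dist_zero_right, Complex.norm_real, Real.norm_eq_abs]
      rw [abs_le]; constructor <;> linarith⟩
    ⟨by simp; linarith, by simp⟩
  rw [hz, sub_zero] at h1
  refine h1.trans (le_of_eq ?_)
  congr 1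
  rw [show (1:ℂ) - β = ((1 - β : ℝ) : ℂ) by push_cast; rfl, Complex.norm_real, Real.norm_eq_abs, abs_of_pos (by linarith)]

lemma single_modulus (q : ℕ) [NeZero q] : ∃ c : ℝ, 0 < c ∧ ∀ χ : DirichletCharacter ℂ q, χ ≠ 1 →
    ∀ s : ℝ, 1 - c < s → χ.LFunction s ≠ 0 := by
  have h : ∀ᶠ c : ℝ in 𝓝[>] 0, ∀ χ : DirichletCharacter ℂ q, χ ≠ 1 →
    ∀ s : ℝ, 1 - c < s → χ.LFunction s ≠ 0 := by
    rw [Filter.eventually_all]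
    intro χ
    by_cases hχ : χ = 1
    · simp [hχ]
    have hc : ContinuousAt (fun s : ℝ => χ.LFunction s) 1 :=
      ((DirichletCharacter.differentiable_LFunction hχ).continuous.comp Complex.continuous_ofReal).continuousAt
    have h1 : (fun s : ℝ => χ.LFunction s) 1 ≠ 0 := by
      simpa using DirichletCharacter.LFunction_apply_one_ne_zero hχ
    have := hc.eventually_ne h1
    rw [Metric.eventually_nhds_iff] at this
    obtain ⟨r, hr, hr2⟩ := this
    filter_upwards [Ioo_mem_nhdsGT hr] with c hcr _ s hs
    rcases le_or_gt 1 s with h | h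
    · exact DirichletCharacter.LFunction_ne_zero_of_one_le_re χ (Or.inl hχ) (by simpa using h)
    · apply hr2
      rw [Real.dist_eq, abs_lt]
      constructor <;> linarith [hcr.2]
  obtain ⟨c, hc, hc0⟩ := (h.and self_mem_nhdsWithin).exists
  exact ⟨c, hc0, hc⟩

/-- The product character at level `q₁ * q₂`. -/
noncomputable def prodChar {q₁ q₂ : ℕ} (χ₁ : DirichletCharacter ℂ q₁) (χ₂ : DirichletCharacter ℂ q₂) :
    DirichletCharacter ℂ (q₁ * q₂) :=
  DirichletCharacter.changeLevel (Nat.dvd_mul_right q₁ q₂) χ₁ *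
    DirichletCharacter.changeLevel (Nat.dvd_mul_left q₂ q₁) χ₂

lemma prodChar_apply {q₁ q₂ : ℕ} (χ₁ : DirichletCharacter ℂ q₁) (χ₂ : DirichletCharacter ℂ q₂) (n : ℕ) :
    prodChar χ₁ χ₂ n = χ₁ n * χ₂ n := by
  by_cases h : Nat.Coprime n (q₁ * q₂)
  · have hu : IsUnit (n : ZMod (q₁ * q₂)) := (ZMod.isUnit_iff_coprime _ _).mpr h
    rw [prodChar, MulChar.mul_apply]
    congr 1
    · have := DirichletCharacter.changeLevel_eq_cast_of_dvd χ₁ (Nat.dvd_mul_right q₁ q₂) hu.unit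
      simpa [ZMod.cast_natCast (Nat.dvd_mul_right q₁ q₂)] using this
    · have := DirichletCharacter.changeLevel_eq_cast_of_dvd χ₂ (Nat.dvd_mul_left q₂ q₁) hu.unit
      simpa [ZMod.cast_natCast (Nat.dvd_mul_left q₂ q₁)] using this
  · have hu : ¬ IsUnit (n : ZMod (q₁ * q₂)) := fun hh => h ((ZMod.isUnit_iff_coprime _ _).mp hh)
    rw [MulChar.map_nonunit _ hu]
    rw [Nat.coprime_mul_iff_right, not_and_or] at h
    rcases h with h | h
    · rw [MulChar.map_nonunit χ₁ (fun hh => h ((ZMod.isUnit_iff_coprime _ _).mp hh)), zero_mul]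
    · rw [MulChar.map_nonunit χ₂ (fun hh => h ((ZMod.isUnit_iff_coprime _ _).mp hh)), mul_zero]

lemma prodChar_ne_one {q₁ q₂ : ℕ} [NeZero q₁] [NeZero q₂] {χ₁ : DirichletCharacter ℂ q₁} {χ₂ : DirichletCharacter ℂ q₂}
    (h₁ : χ₁.IsPrimitive) (h₂ : χ₂.IsPrimitive) (hne : q₂ ≠ q₁) : prodChar χ₁ χ₂ ≠ 1 := by
  intro h
  have e := eq_inv_of_mul_eq_one_left h
  have := congrArg DirichletCharacter.conductor e
  rw [DirichletCharacter.conductor_inv, DirichletCharacter.conductor_changeLevel, DirichletCharacter.conductor_changeLevel] at this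
  rw [h₁, h₂] at this
  exact hne this.symm

end SiegelAux

/-- **Siegel's theorem, zero-free region form.** For every `ε > 0` there is `C(ε) > 0`
such that for every integer `q > 1` and every primitive quadratic Dirichlet character
`χ` mod `q`, the function `L(s,χ)` has no real zero `s` with `s > 1 - C(ε) * q ^ (-ε)`. -/
theorem siegel_zero_free (ε : ℝ) (hε : 0 < ε) :
    ∃ C : ℝ, 0 < C ∧
      ∀ (q : ℕ) (hq : 1 < q),
        haveI : NeZero q := ⟨by omega⟩
        ∀ χ : DirichletCharacter ℂ q,
          χ.IsPrimitive → χ ≠ 1 → χ ^ 2 = 1 →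
            ∀ s : ℝ, 1 - C * (q : ℝ) ^ (-ε) < s → χ.LFunction (s : ℂ) ≠ 0 := by
  set e : ℝ := min ε 1 with he
  have he0 : 0 < e := lt_min hε one_pos
  have he1 : e ≤ 1 := min_le_right _ _
  have heε : e ≤ ε := min_le_left _ _
  have hqε : ∀ q : ℕ, 1 < q → (q : ℝ) ^ (-ε) ≤ 1 ∧ (q : ℝ) ^ (-ε) ≤ (q : ℝ) ^ (-e) ∧ 0 < (q : ℝ) ^ (-ε) := by
    intro q hq
    have h1 : (1:ℝ) ≤ q := by exact_mod_cast hq.le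
    exact ⟨Real.rpow_le_one_of_one_le_of_nonpos h1 (by linarith),
      Real.rpow_le_rpow_of_exponent_le h1 (by linarith), Real.rpow_pos_of_pos (by linarith) _⟩
  by_cases hex : ∃ (q₁ : ℕ) (hq₁ : 1 < q₁),
        haveI : NeZero q₁ := ⟨by omega⟩
        ∃ χ₁ : DirichletCharacter ℂ q₁, χ₁.IsPrimitive ∧ χ₁ ≠ 1 ∧ χ₁ ^ 2 = 1 ∧
          ∃ β : ℝ, 1 - e / 16 < β ∧ β < 1 ∧ χ₁.LFunction (β : ℂ) = 0
  · obtain ⟨q₁, hq₁, χ₁, hp₁, hn₁, hs₁, β, hβ, hβ1, hzβ⟩ := hex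
    haveI : NeZero q₁ := ⟨by omega⟩
    obtain ⟨c₀, hc₀, hc⟩ := estermann
    obtain ⟨c₁, hc₁, hc1⟩ := single_modulus q₁
    set δ : ℝ := e / 8 with hδ
    have hδ0 : 0 < δ := by positivity
    have hδ2 : δ ≤ 1 / 2 := by linarith
    have hQ₁ : (0:ℝ) < q₁ := by exact_mod_cast (by omega : 0 < q₁)
    set A : ℝ := ‖χ₁.LFunction 1‖ with hA
    have hA0 : 0 < A := norm_pos_iff.mpr (DirichletCharacter.LFunction_apply_one_ne_zero hn₁)
    -- the constants
    set D : ℝ := A * (4 / δ / (δ / 2)) * (4 / δ * (q₁ : ℝ) ^ (2 * δ)) with hD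
    have hD0 : 0 < D := by positivity
    set E : ℝ := c₀ * (1 - β) * (q₁ : ℝ) ^ (-(8 * (1 - β))) with hE
    have hE0 : 0 < E := by
      have : 0 < 1 - β := by linarith
      positivity
    refine ⟨min c₁ (min (δ / 2) (E / D)), by positivity, ?_⟩
    intro q hq
    haveI : NeZero q := ⟨by omega⟩
    intro χ hp hn hs s hlt hz
    obtain ⟨hl1, hl2, hl3⟩ := hqε q hq
    have hQ : (0:ℝ) < q := by exact_mod_cast (by omega : 0 < q)
    have hQ1 : (1:ℝ) ≤ q := by exact_mod_cast hq.le
    have hC1 : min c₁ (min (δ / 2) (E / D)) ≤ c₁ := min_le_left _ _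
    have hC2 : min c₁ (min (δ / 2) (E / D)) ≤ δ / 2 := (min_le_right _ _).trans (min_le_left _ _)
    have hC3 : min c₁ (min (δ / 2) (E / D)) ≤ E / D := (min_le_right _ _).trans (min_le_right _ _)
    have hC0 : 0 < min c₁ (min (δ / 2) (E / D)) := by positivity
    set C := min c₁ (min (δ / 2) (E / D))
    have hCq : C * (q : ℝ) ^ (-ε) ≤ C := mul_le_of_le_one_right hC0.le hl1
    have hs1 : s < 1 := by
      by_contra h
      exact DirichletCharacter.LFunction_ne_zero_of_one_le_re χ (Or.inl hn) (by simpa using h) hz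
    by_cases hqq : q = q₁
    · subst hqq
      exact hc1 χ hn s (by linarith) hz
    have k1 := hc q₁ q χ₁ χ (prodChar χ₁ χ) hn₁ hn (prodChar_ne_one hp₁ hp hqq) hs₁ hs
      (prodChar_apply χ₁ χ) β (by linarith) hβ1 hzβ
    have k2 := LFunction_one_le χ hn hδ0 hδ2 (by linarith) hs1 hz
    have k3 := LFunction_bound (prodChar χ₁ χ) (prodChar_ne_one hp₁ hp hqq) hδ0 hδ2 (s := 1)
      (by simp; linarith) (by simp)
    have m1 : E * (q : ℝ) ^ (-(8 * (1 - β))) ≤ D * (1 - s) * (q : ℝ) ^ (4 * δ) := by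
      calc E * (q : ℝ) ^ (-(8 * (1 - β)))
          = c₀ * (1 - β) * ((q₁ * q : ℕ) : ℝ) ^ (-(8 * (1 - β))) := by
            rw [Nat.cast_mul, Real.mul_rpow hQ₁.le hQ.le, hE]; ring
        _ ≤ A * ‖χ.LFunction 1‖ * ‖(prodChar χ₁ χ).LFunction 1‖ := k1
        _ ≤ A * (4 / δ * (q : ℝ) ^ (2 * δ) / (δ / 2) * (1 - s)) *
              (4 / δ * ((q₁ * q : ℕ) : ℝ) ^ (2 * δ)) := by gcongr
        _ = D * (1 - s) * ((q : ℝ) ^ (2 * δ) * (q : ℝ) ^ (2 * δ)) := by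
            rw [Nat.cast_mul, Real.mul_rpow hQ₁.le hQ.le, hD]; ring
        _ = _ := by
            rw [← Real.rpow_add hQ]; congr 2; ring
    have m2 : E * (q : ℝ) ^ (-e) ≤ D * (1 - s) := by
      have e1 : (q : ℝ) ^ (-e) ≤ (q : ℝ) ^ (-(8 * (1 - β))) * (q : ℝ) ^ (-(4 * δ)) := by
        rw [← Real.rpow_add hQ]
        exact Real.rpow_le_rpow_of_exponent_le hQ1 (by linarith)
      calc E * (q : ℝ) ^ (-e) ≤ E * ((q : ℝ) ^ (-(8 * (1 - β))) * (q : ℝ) ^ (-(4 * δ))) := by gcongr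
        _ = (E * (q : ℝ) ^ (-(8 * (1 - β)))) * (q : ℝ) ^ (-(4 * δ)) := by ring
        _ ≤ (D * (1 - s) * (q : ℝ) ^ (4 * δ)) * (q : ℝ) ^ (-(4 * δ)) := by gcongr
        _ = D * (1 - s) := by
          rw [mul_assoc, ← Real.rpow_add hQ]; simp
    have m3 : E / D * (q : ℝ) ^ (-ε) ≤ 1 - s := by
      rw [div_mul_eq_mul_div, div_le_iff₀ hD0]
      calc E * (q : ℝ) ^ (-ε) ≤ E * (q : ℝ) ^ (-e) := by gcongr
        _ ≤ _ := by linarith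
    have m4 : C * (q : ℝ) ^ (-ε) ≤ E / D * (q : ℝ) ^ (-ε) := by gcongr
    linarith
  · refine ⟨e / 16, by positivity, ?_⟩
    intro q hq
    haveI : NeZero q := ⟨by omega⟩
    intro χ hp hn hs s hlt hz
    obtain ⟨hl1, hl2, hl3⟩ := hqε q hq
    have hs1 : s < 1 := by
      by_contra h
      exact DirichletCharacter.LFunction_ne_zero_of_one_le_re χ (Or.inl hn) (by simpa using h) hz
    refine hex ⟨q, hq, χ, hp, hn, hs, s, ?_, hs1, hz⟩
    have : e / 16 * (q : ℝ) ^ (-ε) ≤ e / 16 := mul_le_of_le_one_right (by linarith) hl1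
    linarith
end
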